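/- arXiv:2406.14808 — 7 statements merged into one kernel-verified Lean document; each statement's English description precedes it below -/
import Mathlib

section
/- Let β > 1, let τ be an integer with 1 ≤ τ < β, let M > 0 and ε > 0, and let Ω ⊆ ℝ^m be a bounded open set. Define ᾱ = (τ ε ⌊β⌋! / (2M(β − τ)))^{1/β}. Then there exists a constant C depending only on τ and β (one may take C = (β/τ)·T_{⌊β⌋}^{(τ)}(1), where T_d is the degree-d Chebyshev polynomial) such that: for all u, ũ ∈ C^β(Ω, M) with sup_{x∈Ω} |u(x) − ũ(x)| ≤ ε, and for every multi-index k = (k_1,…,k_m) with |k| ≤ τ, one has sup_{x ∈ int_ᾱ(Ω)} |D^k u(x) − D^k ũ(x)| ≤ C · M^{τ/β} · ε^{(β−τ)/β}. -/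
/-- Partial derivative of `f` in coordinate direction `i`. -/
noncomputable def pDeriv {m : ℕ} (i : Fin m) (f : EuclideanSpace ℝ (Fin m) → ℝ) :
    EuclideanSpace ℝ (Fin m) → ℝ :=
  fun x => fderiv ℝ f x (EuclideanSpace.single i 1)

/-- Iterated partial derivative along a list of coordinate directions. -/
noncomputable def listDeriv {m : ℕ} :
    List (Fin m) → (EuclideanSpace ℝ (Fin m) → ℝ) → EuclideanSpace ℝ (Fin m) → ℝ
  | [], f => f
  | i :: l, f => listDeriv l (pDeriv i f)

/-- Multi-index partial derivative `D^k f`. -/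
noncomputable def mDeriv {m : ℕ} (k : Fin m → ℕ) (f : EuclideanSpace ℝ (Fin m) → ℝ) :
    EuclideanSpace ℝ (Fin m) → ℝ :=
  listDeriv ((List.finRange m).flatMap fun i => List.replicate (k i) i) f

/-- The multi-indices `k` on `Fin m` with `|k| ≤ fl`. -/
def mIdxLe (m fl : ℕ) : Finset (Fin m → ℕ) :=
  (Fintype.piFinset fun _ : Fin m => Finset.range (fl + 1)).filter fun k => ∑ i, k i ≤ fl

/-- The multi-indices `k` on `Fin m` with `|k| = fl`. -/
def mIdxEq (m fl : ℕ) : Finset (Fin m → ℕ) :=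
  (Fintype.piFinset fun _ : Fin m => Finset.range (fl + 1)).filter fun k => ∑ i, k i = fl

/-- `u ∈ C^β(Ω, M)`: `u` has derivatives on `Ω` up to order `fl` (the largest integer
strictly smaller than `β`) and its Hölder norm
`Σ_{|k| ≤ fl} sup_Ω |D^k u| + Σ_{|k| = fl} Hölder-seminorm(D^k u)` is at most `M`;
the norm bound is expressed via the existence of pointwise bounds summing to at most `M`. -/
def HolderBall {m : ℕ} (β : ℝ) (fl : ℕ) (Ω : Set (EuclideanSpace ℝ (Fin m))) (M : ℝ)
    (u : EuclideanSpace ℝ (Fin m) → ℝ) : Prop :=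
  ContDiffOn ℝ fl u Ω ∧
  ∃ b h : (Fin m → ℕ) → ℝ,
    (∀ k ∈ mIdxLe m fl, ∀ x ∈ Ω, |mDeriv k u x| ≤ b k) ∧
    (∀ k ∈ mIdxEq m fl, ∀ x ∈ Ω, ∀ y ∈ Ω, x ≠ y →
      |mDeriv k u x - mDeriv k u y| ≤ h k * ‖x - y‖ ^ (β - fl)) ∧
    (∑ k ∈ mIdxLe m fl, b k) + (∑ k ∈ mIdxEq m fl, h k) ≤ M

/-!
Let `w = u - ũ` on a ball of radius `r`, where `|w| ≤ E` and the derivatives of order `n = ⌊β⌋`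
oscillate by at most `H`. An iterated finite difference of `w` with step `h ∼ r` is at most
`2 ^ j * E`, and by the mean value theorem it equals `h ^ j` times the value of the corresponding
derivative of order `j` at a point near the centre. So every derivative of order `j` is at most a
constant times `E / r ^ j` somewhere nearby; its value at the centre differs from that by at most
`H` if `j = n`, and by at most `r` times a bound for the derivatives of order `j + 1` otherwise.
Descending from `j = n` gives `|D^k w| ≤ C (E + H r ^ n) / r ^ j` for `|k| = j`. With
`H ∼ M r ^ (β - n)` and `r ∼ (ε / M) ^ (1 / β)` the two terms balance, at `ε / r ^ j`.
-/

variable {m : ℕ} {f g : EuclideanSpace ℝ (Fin m) → ℝ} {Ω : Set (EuclideanSpace ℝ (Fin m))}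

section PartialDerivatives

lemma fderiv_apply_eq_sum_pDeriv (x v : EuclideanSpace ℝ (Fin m)) :
    fderiv ℝ f x v = ∑ i, v i * pDeriv i f x := by
  conv_lhs => rw [← (EuclideanSpace.basisFun (Fin m) ℝ).sum_repr v]
  simp [pDeriv]

lemma pDeriv_comm {x : EuclideanSpace ℝ (Fin m)} (hf : ContDiffAt ℝ 2 f x) (i j : Fin m) :
    pDeriv i (pDeriv j f) x = pDeriv j (pDeriv i f) x := by
  have hdiff : DifferentiableAt ℝ (fderiv ℝ f) x :=
    (hf.fderiv_right (m := 1) le_rfl).differentiableAt one_ne_zero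
  have hsymm : IsSymmSndFDerivAt ℝ f x := hf.isSymmSndFDerivAt (by simp)
  have hsecond (i j : Fin m) : pDeriv i (pDeriv j f) x =
      fderiv ℝ (fderiv ℝ f) x (EuclideanSpace.single i 1) (EuclideanSpace.single j 1) := by
    unfold pDeriv
    rw [fderiv_clm_apply hdiff (differentiableAt_const _)]
    simp
  rw [hsecond i j, hsecond j i, hsymm.eq]

lemma pDeriv_eqOn (hΩ : IsOpen Ω) (hfg : Set.EqOn f g Ω) (i : Fin m) :
    Set.EqOn (pDeriv i f) (pDeriv i g) Ω := fun x hx => by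
  simp only [pDeriv, (hfg.eventuallyEq_of_mem (hΩ.mem_nhds hx)).fderiv_eq]

lemma contDiffOn_pDeriv {n : ℕ} (hΩ : IsOpen Ω) (hf : ContDiffOn ℝ (n + 1) f Ω) (i : Fin m) :
    ContDiffOn ℝ n (pDeriv i f) Ω :=
  (hf.fderiv_of_isOpen hΩ le_rfl).clm_apply contDiffOn_const

lemma contDiffOn_listDeriv (hΩ : IsOpen Ω) {l : List (Fin m)} {n p : ℕ}
    (hf : ContDiffOn ℝ n f Ω) (hl : l.length + p ≤ n) : ContDiffOn ℝ p (listDeriv l f) Ω := by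
  induction l generalizing f n with
  | nil => exact hf.of_le (by simpa using hl)
  | cons i l ih =>
    rw [List.length_cons] at hl
    obtain ⟨n, rfl⟩ : ∃ n', n = n' + 1 := ⟨n - 1, by omega⟩
    exact ih (contDiffOn_pDeriv hΩ (by exact_mod_cast hf) i) (by omega)

lemma differentiableOn_listDeriv (hΩ : IsOpen Ω) {l : List (Fin m)} {n : ℕ}
    (hf : ContDiffOn ℝ n f Ω) (hl : l.length < n) : DifferentiableOn ℝ (listDeriv l f) Ω :=
  (contDiffOn_listDeriv (p := 1) hΩ hf hl).differentiableOn one_ne_zero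

lemma listDeriv_concat (l : List (Fin m)) (i : Fin m) (f : EuclideanSpace ℝ (Fin m) → ℝ) :
    listDeriv (l ++ [i]) f = pDeriv i (listDeriv l f) := by
  induction l generalizing f with
  | nil => rfl
  | cons j _ ih => exact ih (pDeriv j f)

lemma listDeriv_comp_add_right (l : List (Fin m)) (f : EuclideanSpace ℝ (Fin m) → ℝ)
    (a : EuclideanSpace ℝ (Fin m)) :
    listDeriv l (fun x => f (x + a)) = fun x => listDeriv l f (x + a) := by
  induction l generalizing f with
  | nil => rfl
  | cons i _ ih =>
    have hstep : pDeriv i (fun x => f (x + a)) = fun x => pDeriv i f (x + a) := by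
      funext x
      simp only [pDeriv, fderiv_comp_add_right]
    simp only [listDeriv, hstep, ih]

lemma listDeriv_eqOn (hΩ : IsOpen Ω) (hfg : Set.EqOn f g Ω) (l : List (Fin m)) :
    Set.EqOn (listDeriv l f) (listDeriv l g) Ω := by
  induction l generalizing f g with
  | nil => exact hfg
  | cons i _ ih => exact ih (pDeriv_eqOn hΩ hfg i)

lemma listDeriv_sub (hΩ : IsOpen Ω) {l : List (Fin m)} (hf : ContDiffOn ℝ l.length f Ω)
    (hg : ContDiffOn ℝ l.length g Ω) :
    Set.EqOn (listDeriv l (f - g)) (listDeriv l f - listDeriv l g) Ω := by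
  induction l generalizing f g with
  | nil => exact fun _ _ => rfl
  | cons i l ih =>
    simp only [List.length_cons, Nat.cast_add, Nat.cast_one] at hf hg
    have hstep : Set.EqOn (pDeriv i (f - g)) (pDeriv i f - pDeriv i g) Ω := fun x hx => by
      have hfx := (hf.contDiffAt (hΩ.mem_nhds hx)).differentiableAt (by simp)
      have hgx := (hg.contDiffAt (hΩ.mem_nhds hx)).differentiableAt (by simp)
      simp [pDeriv, fderiv_sub hfx hgx]
    exact (listDeriv_eqOn hΩ hstep l).trans
      (ih (contDiffOn_pDeriv hΩ hf i) (contDiffOn_pDeriv hΩ hg i))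

lemma listDeriv_perm (hΩ : IsOpen Ω) {l l' : List (Fin m)} (hll' : l.Perm l')
    (hf : ContDiffOn ℝ l.length f Ω) : Set.EqOn (listDeriv l f) (listDeriv l' f) Ω := by
  induction hll' generalizing f with
  | nil => exact fun _ _ => rfl
  | cons i _ ih => exact ih (contDiffOn_pDeriv hΩ (by exact_mod_cast hf) i)
  | swap i j l =>
    refine listDeriv_eqOn hΩ (fun x hx => pDeriv_comm ?_ i j) l
    refine (hf.contDiffAt (hΩ.mem_nhds hx)).of_le ?_
    simp only [List.length_cons]
    exact_mod_cast Nat.le_add_left 2 l.length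
  | trans hperm _ ih ih' => exact (ih hf).trans (ih' (hperm.length_eq ▸ hf))

lemma perm_flatMap_replicate_count (l : List (Fin m)) :
    l.Perm ((List.finRange m).flatMap fun i => List.replicate (l.count i) i) := by
  refine List.perm_iff_count.2 fun a => ?_
  simp [List.count_flatMap, Function.comp_def, List.count_replicate, ← Fin.sum_univ_def]

lemma length_flatMap_replicate (k : Fin m → ℕ) :
    ((List.finRange m).flatMap fun i => List.replicate (k i) i).length = ∑ i, k i := by
  simp [List.length_flatMap, Fin.sum_univ_def]

lemma sum_count_eq_length (l : List (Fin m)) : ∑ i, l.count i = l.length := by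
  rw [← length_flatMap_replicate, ← (perm_flatMap_replicate_count l).length_eq]

lemma listDeriv_eqOn_mDeriv (hΩ : IsOpen Ω) {l : List (Fin m)} (hf : ContDiffOn ℝ l.length f Ω) :
    Set.EqOn (listDeriv l f) (mDeriv (fun i => l.count i) f) Ω :=
  listDeriv_perm hΩ (perm_flatMap_replicate_count l) hf

end PartialDerivatives

section FiniteDifferences

/-- The `ℓ¹` norm of a vector. Displacements are measured in it so that the constants below do not
depend on the dimension `m`. -/
def l1Norm (v : EuclideanSpace ℝ (Fin m)) : ℝ := ∑ i, |v i|

lemma l1Norm_add_le (v w : EuclideanSpace ℝ (Fin m)) : l1Norm (v + w) ≤ l1Norm v + l1Norm w := by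
  simp only [l1Norm, ← Finset.sum_add_distrib]
  exact Finset.sum_le_sum fun i _ => abs_add_le _ _

lemma l1Norm_smul_single (t : ℝ) (i : Fin m) : l1Norm (t • EuclideanSpace.single i 1) = |t| := by
  simp [l1Norm, apply_ite]

lemma norm_le_l1Norm (v : EuclideanSpace ℝ (Fin m)) : ‖v‖ ≤ l1Norm v := by
  conv_lhs => rw [← (EuclideanSpace.basisFun (Fin m) ℝ).sum_repr v]
  refine (norm_sum_le _ _).trans_eq ?_
  simp [l1Norm, norm_smul]

lemma exists_sub_eq_pDeriv_mul {s : Set (EuclideanSpace ℝ (Fin m))} (hs : IsOpen s)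
    (hsc : Convex ℝ s) (hg : DifferentiableOn ℝ g s) {y : EuclideanSpace ℝ (Fin m)} {h : ℝ}
    {i : Fin m} (hy : y ∈ s) (hyh : y + h • EuclideanSpace.single i 1 ∈ s) :
    ∃ z, l1Norm (z - y) ≤ |h| ∧ g (y + h • EuclideanSpace.single i 1) - g y = pDeriv i g z * h := by
  obtain ⟨z, hz, hgz⟩ := domain_mvt
    (fun z hz => (hg.hasFDerivAt (hs.mem_nhds hz)).hasFDerivWithinAt) hsc hy hyh
  rw [segment_eq_image'] at hz
  obtain ⟨θ, ⟨hθ0, hθ1⟩, rfl⟩ := hz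
  refine ⟨y + θ • (y + h • EuclideanSpace.single i 1 - y), ?_, ?_⟩
  · rw [add_sub_cancel_left, add_sub_cancel_left, smul_smul, l1Norm_smul_single, abs_mul,
      abs_of_nonneg hθ0]
    exact mul_le_of_le_one_left (abs_nonneg h) hθ1
  · rw [hgz, add_sub_cancel_left, map_smul, smul_eq_mul, mul_comm, pDeriv]

lemma abs_sub_le_mul_l1Norm {s : Set (EuclideanSpace ℝ (Fin m))} (hs : IsOpen s)
    (hsc : Convex ℝ s) (hg : DifferentiableOn ℝ g s) {B : ℝ}
    (hB : ∀ i, ∀ z ∈ s, |pDeriv i g z| ≤ B) {x y : EuclideanSpace ℝ (Fin m)} (hx : x ∈ s)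
    (hy : y ∈ s) : |g y - g x| ≤ B * l1Norm (y - x) := by
  obtain ⟨z, hz, hgz⟩ := domain_mvt
    (fun z hz => (hg.hasFDerivAt (hs.mem_nhds hz)).hasFDerivWithinAt) hsc hx hy
  have hzs : z ∈ s := hsc.segment_subset hx hy hz
  rw [hgz, fderiv_apply_eq_sum_pDeriv, mul_comm, l1Norm, Finset.sum_mul]
  refine (Finset.abs_sum_le_sum_abs _ _).trans (Finset.sum_le_sum fun i _ => ?_)
  rw [abs_mul]
  exact mul_le_mul_of_nonneg_left (hB i z hzs) (abs_nonneg _)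

lemma exists_l1Norm_le_abs_listDeriv_le {x : EuclideanSpace ℝ (Fin m)} {r h E : ℝ} (hh : 0 < h)
    (l : List (Fin m)) (hr : l.length * h < r)
    (hf : ContDiffOn ℝ l.length f (Metric.ball x r)) (hE : ∀ y ∈ Metric.ball x r, |f y| ≤ E) :
    ∃ y, l1Norm (y - x) ≤ l.length * h ∧ |listDeriv l f y| ≤ (2 / h) ^ l.length * E := by
  induction l using List.reverseRecOn generalizing f r E with
  | nil =>
    exact ⟨x, by simp [l1Norm], by simpa [listDeriv] using hE x (by simpa using hr)⟩
  | append_singleton l i ih =>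
    simp only [List.length_append, List.length_singleton, Nat.cast_add, Nat.cast_one] at hr hf ⊢
    set a : EuclideanSpace ℝ (Fin m) := h • EuclideanSpace.single i 1 with ha
    have hshift : ∀ y ∈ Metric.ball x (r - h), y + a ∈ Metric.ball x r := fun y hy => by
      have hnorm : ‖a‖ = h := by simp [ha, norm_smul, abs_of_pos hh]
      rw [Metric.mem_ball] at hy ⊢
      have hdist : dist (y + a) y = h := by rw [dist_eq_norm, add_sub_cancel_left, hnorm]
      linarith [dist_triangle (y + a) y x]
    have hsub : Metric.ball x (r - h) ⊆ Metric.ball x r := Metric.ball_subset_ball (by linarith)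
    have hfl : ContDiffOn ℝ l.length f (Metric.ball x r) := hf.of_le (by simp)
    have hfa : ContDiffOn ℝ l.length (fun y => f (y + a)) (Metric.ball x (r - h)) :=
      hfl.comp (by fun_prop) hshift
    -- The induction hypothesis for the difference of `f` along `a` gives a point where the
    -- difference of `listDeriv l f` is small; the mean value theorem converts it to a derivative.
    obtain ⟨y, hyx, hy⟩ := ih (f := (fun y => f (y + a)) - f) (r := r - h) (E := 2 * E)
      (by linarith) (hfa.sub (hfl.mono hsub)) fun y hy =>
        (abs_sub _ _).trans (by linarith [hE _ (hshift y hy), hE y (hsub hy)])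
    have hyball : y ∈ Metric.ball x (r - h) :=
      mem_ball_iff_norm.2 ((norm_le_l1Norm _).trans_lt (by linarith))
    obtain ⟨z, hzy, hz⟩ := exists_sub_eq_pDeriv_mul Metric.isOpen_ball (convex_ball x r)
      (differentiableOn_listDeriv Metric.isOpen_ball (n := l.length + 1)
        (by exact_mod_cast hf) (Nat.lt_succ_self _)) (hsub hyball) (hshift y hyball)
    rw [listDeriv_sub Metric.isOpen_ball hfa (hfl.mono hsub) hyball, Pi.sub_apply,
      listDeriv_comp_add_right, hz, abs_mul, abs_of_pos hh] at hy
    refine ⟨z, ?_, ?_⟩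
    · calc l1Norm (z - x) = l1Norm ((z - y) + (y - x)) := by rw [sub_add_sub_cancel]
        _ ≤ l1Norm (z - y) + l1Norm (y - x) := l1Norm_add_le _ _
        _ ≤ (l.length + 1) * h := by rw [abs_of_pos hh] at hzy; linarith
    · rw [listDeriv_concat, pow_succ]
      calc |pDeriv i (listDeriv l f) z| ≤ (2 / h) ^ l.length * (2 * E) / h := (le_div_iff₀ hh).2 hy
        _ = (2 / h) ^ l.length * (2 / h) * E := by ring

end FiniteDifferences

section Interpolation

/-- `f` is `C^n` on `s` and bounded there by `E`, and each of its partial derivatives of order `n`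
oscillates by at most `H` on `s`: the data between which intermediate derivatives are
interpolated. Nonnegativity of `H` is a separate field since there may be no derivative of order
`n`, namely when `m = 0 < n`. -/
structure OscControlledOn (n : ℕ) (f : EuclideanSpace ℝ (Fin m) → ℝ)
    (s : Set (EuclideanSpace ℝ (Fin m))) (E H : ℝ) : Prop where
  contDiffOn : ContDiffOn ℝ n f s
  abs_le : ∀ y ∈ s, |f y| ≤ E
  osc_nonneg : 0 ≤ H
  abs_listDeriv_sub_le : ∀ l : List (Fin m), l.length = n → ∀ y ∈ s, ∀ z ∈ s,
    |listDeriv l f y - listDeriv l f z| ≤ H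

namespace OscControlledOn

variable {n : ℕ} {s t : Set (EuclideanSpace ℝ (Fin m))} {E H : ℝ}

lemma mono (hf : OscControlledOn n f s E H) (hts : t ⊆ s) : OscControlledOn n f t E H where
  contDiffOn := hf.contDiffOn.mono hts
  abs_le y hy := hf.abs_le y (hts hy)
  osc_nonneg := hf.osc_nonneg
  abs_listDeriv_sub_le l hl y hy z hz := hf.abs_listDeriv_sub_le l hl y (hts hy) z (hts hz)

lemma bound_nonneg (hf : OscControlledOn n f s E H) (hs : s.Nonempty) : 0 ≤ E :=
  let ⟨x, hx⟩ := hs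
  (abs_nonneg _).trans (hf.abs_le x hx)

variable {x : EuclideanSpace ℝ (Fin m)} {r : ℝ} {l : List (Fin m)}

lemma exists_near_abs_listDeriv_le (hf : OscControlledOn n f (Metric.ball x r) E H) (hr : 0 < r)
    (hl : l.length ≤ n) :
    ∃ y, l1Norm (y - x) < r / 2 ∧
      |listDeriv l f y| ≤ (4 * (l.length + 1)) ^ l.length * (E / r ^ l.length) := by
  have hstep : l.length * (r / (2 * (l.length + 1))) < r / 2 := by
    rw [mul_div_assoc', div_lt_div_iff₀ (by positivity) two_pos]
    nlinarith
  obtain ⟨y, hyx, hy⟩ := exists_l1Norm_le_abs_listDeriv_le (by positivity) l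
    (hstep.trans (by linarith)) (hf.contDiffOn.of_le (by exact_mod_cast hl)) hf.abs_le
  refine ⟨y, hyx.trans_lt hstep, hy.trans_eq ?_⟩
  rw [← mul_comm_div, ← div_pow]
  congr 2
  field_simp
  norm_num

lemma abs_listDeriv_le_top (hf : OscControlledOn n f (Metric.ball x r) E H) (hr : 0 < r)
    (hl : l.length = n) : |listDeriv l f x| ≤ (4 * (n + 1)) ^ n * (E / r ^ n) + H := by
  obtain ⟨y, hyx, hy⟩ := hf.exists_near_abs_listDeriv_le hr hl.le
  have hyball : y ∈ Metric.ball x r :=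
    mem_ball_iff_norm.2 ((norm_le_l1Norm _).trans_lt (by linarith))
  have hosc := hf.abs_listDeriv_sub_le l hl x (Metric.mem_ball_self hr) y hyball
  rw [hl] at hy
  linarith [abs_sub_abs_le_abs_sub (listDeriv l f x) (listDeriv l f y)]

lemma abs_listDeriv_le_of_succ (hf : OscControlledOn n f (Metric.ball x r) E H) (hr : 0 < r)
    (hl : l.length < n) {B : ℝ} (hB0 : 0 ≤ B)
    (hB : ∀ i, ∀ z ∈ Metric.ball x (r / 2), |listDeriv (l ++ [i]) f z| ≤ B) :
    |listDeriv l f x| ≤ (4 * (l.length + 1)) ^ l.length * (E / r ^ l.length) + B * r := by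
  obtain ⟨y, hyx, hy⟩ := hf.exists_near_abs_listDeriv_le hr hl.le
  have hsub : Metric.ball x (r / 2) ⊆ Metric.ball x r := Metric.ball_subset_ball (by linarith)
  have hyball : y ∈ Metric.ball x (r / 2) :=
    mem_ball_iff_norm.2 ((norm_le_l1Norm _).trans_lt hyx)
  have hmvt := abs_sub_le_mul_l1Norm Metric.isOpen_ball (convex_ball x (r / 2))
    ((differentiableOn_listDeriv Metric.isOpen_ball hf.contDiffOn hl).mono hsub)
    (fun i z hz => listDeriv_concat l i f ▸ hB i z hz) (Metric.mem_ball_self (by linarith)) hyball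
  have hBr : B * l1Norm (y - x) ≤ B * r := by gcongr; linarith
  linarith [abs_sub_abs_le_abs_sub (listDeriv l f x) (listDeriv l f y),
    abs_sub_comm (listDeriv l f x) (listDeriv l f y)]

theorem exists_abs_listDeriv_le {j : ℕ} (hj : j ≤ n) :
    ∃ C : ℝ, 0 < C ∧ ∀ (m : ℕ) (f : EuclideanSpace ℝ (Fin m) → ℝ) (x : EuclideanSpace ℝ (Fin m))
      (r E H : ℝ), 0 < r → OscControlledOn n f (Metric.ball x r) E H →
      ∀ l : List (Fin m), l.length = j → |listDeriv l f x| ≤ C * ((E + H * r ^ n) / r ^ j) := by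
  induction hj using Nat.decreasingInduction with
  | self =>
    refine ⟨(4 * (n + 1)) ^ n + 1, by positivity, fun m f x r E H hr hf l hl => ?_⟩
    have hE : 0 ≤ E := hf.bound_nonneg (Metric.nonempty_ball.2 hr)
    have hH : 0 ≤ H := hf.osc_nonneg
    calc |listDeriv l f x| ≤ (4 * (n + 1)) ^ n * (E / r ^ n) + H := hf.abs_listDeriv_le_top hr hl
      _ ≤ (4 * (n + 1)) ^ n * (E / r ^ n + H) + (E / r ^ n + H) := by
        gcongr <;> linarith [div_nonneg hE (pow_pos hr n).le]
      _ = ((4 * (n + 1)) ^ n + 1) * ((E + H * r ^ n) / r ^ n) := by field_simp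
  | of_succ j hj ih =>
    obtain ⟨C, hC, ih⟩ := ih
    refine ⟨(4 * (j + 1)) ^ j + 2 ^ (j + 1) * C, by positivity, fun m f x r E H hr hf l hl => ?_⟩
    have hE : 0 ≤ E := hf.bound_nonneg (Metric.nonempty_ball.2 hr)
    have hH : 0 ≤ H := hf.osc_nonneg
    have hnext (i : Fin m) (z) (hz : z ∈ Metric.ball x (r / 2)) : |listDeriv (l ++ [i]) f z| ≤
        C * ((E + H * (r / 2) ^ n) / (r / 2) ^ (j + 1)) := by
      have hsub : Metric.ball z (r / 2) ⊆ Metric.ball x r :=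
        Metric.ball_subset_ball' (by linarith [Metric.mem_ball.1 hz])
      exact ih m f z (r / 2) E H (by positivity) (hf.mono hsub) (l ++ [i]) (by simp [hl])
    have hrec := hf.abs_listDeriv_le_of_succ hr (hl ▸ hj) (by positivity) hnext
    rw [hl] at hrec
    calc |listDeriv l f x|
      _ ≤ (4 * (j + 1)) ^ j * (E / r ^ j) +
          C * ((E + H * (r / 2) ^ n) / (r / 2) ^ (j + 1)) * r := hrec
      _ ≤ (4 * (j + 1)) ^ j * ((E + H * r ^ n) / r ^ j) +
          C * ((E + H * r ^ n) / (r / 2) ^ (j + 1)) * r := by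
        gcongr
        · exact le_add_of_nonneg_right (by positivity)
        · linarith
      _ = ((4 * (j + 1)) ^ j + 2 ^ (j + 1) * C) * ((E + H * r ^ n) / r ^ j) := by
        rw [div_pow, pow_succ r]
        field_simp

end OscControlledOn

end Interpolation

lemma mem_mIdxLe {n : ℕ} {k : Fin m → ℕ} : k ∈ mIdxLe m n ↔ ∑ i, k i ≤ n := by
  simp only [mIdxLe, Finset.mem_filter, Fintype.mem_piFinset, Finset.mem_range, Nat.lt_succ_iff,
    and_iff_right_iff_imp]
  exact fun hk i => (Finset.single_le_sum (fun _ _ => Nat.zero_le _) (Finset.mem_univ i)).trans hk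

lemma mem_mIdxEq {n : ℕ} {k : Fin m → ℕ} : k ∈ mIdxEq m n ↔ ∑ i, k i = n := by
  have hle : k ∈ mIdxEq m n ↔ k ∈ mIdxLe m n ∧ ∑ i, k i = n := by
    simp only [mIdxEq, mIdxLe, Finset.mem_filter]
    exact ⟨fun h => ⟨⟨h.1, h.2.le⟩, h.2⟩, fun h => ⟨h.1.1, h.2⟩⟩
  rw [hle, mem_mIdxLe, and_iff_right_iff_imp]
  exact Eq.le

namespace HolderBall

variable {β M : ℝ} {n : ℕ} {u v : EuclideanSpace ℝ (Fin m) → ℝ}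

lemma abs_mDeriv_sub_le (hn : n < β) (hu : HolderBall β n Ω M u) {k : Fin m → ℕ}
    (hk : ∑ i, k i = n) {x y : EuclideanSpace ℝ (Fin m)} (hx : x ∈ Ω) (hy : y ∈ Ω) :
    |mDeriv k u x - mDeriv k u y| ≤ M * ‖x - y‖ ^ (β - n) := by
  obtain ⟨-, b, h, hb, hh, hM⟩ := hu
  rcases eq_or_ne x y with rfl | hxy
  · simp [Real.zero_rpow (sub_pos.2 hn).ne']
  have hpos : 0 < ‖x - y‖ ^ (β - n) := Real.rpow_pos_of_pos (norm_sub_pos_iff.2 hxy) _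
  have hb0 (k) (hk : k ∈ mIdxLe m n) : 0 ≤ b k := (abs_nonneg _).trans (hb k hk x hx)
  have hh0 (k) (hk : k ∈ mIdxEq m n) : 0 ≤ h k :=
    nonneg_of_mul_nonneg_left ((abs_nonneg _).trans (hh k hk x hx y hy hxy)) hpos
  have hkM : h k ≤ M := by
    linarith [Finset.single_le_sum hh0 (mem_mIdxEq.2 hk), Finset.sum_nonneg hb0]
  exact (hh k (mem_mIdxEq.2 hk) x hx y hy hxy).trans (by gcongr)

lemma abs_mDeriv_le (hΩ : IsOpen Ω) (hn : n ≠ 0) (hu : HolderBall β n Ω M u) {k : Fin m → ℕ}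
    (hk : ∑ i, k i ≤ n) {x : EuclideanSpace ℝ (Fin m)} (hx : x ∈ Ω) : |mDeriv k u x| ≤ M := by
  obtain ⟨-, b, h, hb, hh, hM⟩ := hu
  have hb0 (k) (hk : k ∈ mIdxLe m n) : 0 ≤ b k := (abs_nonneg _).trans (hb k hk x hx)
  have hh0 (k) (hk : k ∈ mIdxEq m n) : 0 ≤ h k := by
    obtain ⟨i, -⟩ := Finset.exists_ne_zero_of_sum_ne_zero (mem_mIdxEq.1 hk ▸ hn)
    have : Nonempty (Fin m) := ⟨i⟩
    obtain ⟨y, hy, hyx⟩ := (infinite_of_mem_nhds x (hΩ.mem_nhds hx)).nontrivial.exists_ne x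
    exact nonneg_of_mul_nonneg_left ((abs_nonneg _).trans (hh k hk x hx y hy hyx.symm))
      (Real.rpow_pos_of_pos (norm_sub_pos_iff.2 hyx.symm) _)
  have hkM : b k ≤ M := by
    linarith [Finset.single_le_sum hb0 (mem_mIdxLe.2 hk), Finset.sum_nonneg hh0]
  exact (hb k (mem_mIdxLe.2 hk) x hx).trans hkM

lemma oscControlledOn_sub (hΩ : IsOpen Ω) (hn : n < β) (hM : 0 ≤ M) (hu : HolderBall β n Ω M u)
    (hv : HolderBall β n Ω M v) {x : EuclideanSpace ℝ (Fin m)} {r ε : ℝ} (hr : 0 < r)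
    (hx : Metric.ball x r ⊆ Ω) (huv : ∀ y ∈ Ω, |u y - v y| ≤ ε) :
    OscControlledOn n (u - v) (Metric.ball x r) ε (2 * M * (2 * r) ^ (β - n)) where
  contDiffOn := (hu.1.sub hv.1).mono hx
  abs_le y hy := huv y (hx hy)
  osc_nonneg := by positivity
  abs_listDeriv_sub_le l hl y hy z hz := by
    subst hl
    have hosc {w} (hw : HolderBall β l.length Ω M w) :
        |listDeriv l w y - listDeriv l w z| ≤ M * (2 * r) ^ (β - l.length) := by
      rw [listDeriv_eqOn_mDeriv hΩ hw.1 (hx hy), listDeriv_eqOn_mDeriv hΩ hw.1 (hx hz)]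
      refine (hw.abs_mDeriv_sub_le hn (sum_count_eq_length l) (hx hy) (hx hz)).trans ?_
      rw [← dist_eq_norm]
      gcongr
      linarith [dist_triangle_right y z x, Metric.mem_ball.1 hy, Metric.mem_ball.1 hz]
    rw [listDeriv_sub hΩ hu.1 hv.1 (hx hy), listDeriv_sub hΩ hu.1 hv.1 (hx hz), Pi.sub_apply,
      Pi.sub_apply, sub_sub_sub_comm]
    linarith [abs_sub (listDeriv l u y - listDeriv l u z) (listDeriv l v y - listDeriv l v z),
      hosc hu, hosc hv]

end HolderBall

section HolderInterpolation

lemma mDeriv_sub (hΩ : IsOpen Ω) {k : Fin m → ℕ} {n : ℕ} (hk : ∑ i, k i ≤ n)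
    (hf : ContDiffOn ℝ n f Ω) (hg : ContDiffOn ℝ n g Ω) :
    Set.EqOn (mDeriv k (f - g)) (mDeriv k f - mDeriv k g) Ω := by
  rw [← length_flatMap_replicate] at hk
  exact listDeriv_sub hΩ (hf.of_le (by exact_mod_cast hk)) (hg.of_le (by exact_mod_cast hk))

theorem HolderBall.exists_abs_mDeriv_sub_le {β c : ℝ} {n j : ℕ} (hn : n < β) (hj : j ≤ n)
    (hc : 0 < c) :
    ∃ C : ℝ, 0 < C ∧ ∀ (m : ℕ) (Ω : Set (EuclideanSpace ℝ (Fin m))), IsOpen Ω →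
      ∀ M δ : ℝ, 0 < M → 0 < δ → ∀ u v : EuclideanSpace ℝ (Fin m) → ℝ,
        HolderBall β n Ω M u → HolderBall β n Ω M v → (∀ y ∈ Ω, |u y - v y| ≤ M * δ ^ β) →
        ∀ k : Fin m → ℕ, ∑ i, k i = j → ∀ x, Metric.ball x (c * δ) ⊆ Ω →
          |mDeriv k u x - mDeriv k v x| ≤ C * (M * δ ^ (β - j)) := by
  obtain ⟨C, hC, hinterp⟩ := OscControlledOn.exists_abs_listDeriv_le hj
  refine ⟨C * ((1 + 2 * (2 * c) ^ (β - n) * c ^ n) / c ^ j), by positivity,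
    fun m Ω hΩ M δ hM hδ u v hu hv huv k hk x hx => ?_⟩
  have hr : 0 < c * δ := by positivity
  have hδn : δ ^ (β - n) * δ ^ n = δ ^ β := by
    rw [← Real.rpow_natCast, ← Real.rpow_add hδ, sub_add_cancel]
  have hδj : δ ^ β / δ ^ j = δ ^ (β - j) := by
    rw [Real.rpow_sub hδ, Real.rpow_natCast]
  have hle := hinterp m (u - v) x (c * δ) _ _ hr (hu.oscControlledOn_sub hΩ hn hM.le hv hr hx huv)
    _ ((length_flatMap_replicate k).trans hk)
  calc |mDeriv k u x - mDeriv k v x| = |mDeriv k (u - v) x| := by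
        rw [mDeriv_sub hΩ (hk.trans_le hj) hu.1 hv.1 (hx (Metric.mem_ball_self hr)), Pi.sub_apply]
    _ ≤ C * ((M * δ ^ β + 2 * M * (2 * (c * δ)) ^ (β - n) * (c * δ) ^ n) / (c * δ) ^ j) := hle
    _ = C * ((1 + 2 * (2 * c) ^ (β - n) * c ^ n) / c ^ j) * (M * (δ ^ β / δ ^ j)) := by
        rw [← mul_assoc 2 c δ, Real.mul_rpow (by positivity) hδ.le, mul_pow, mul_pow, ← hδn]
        field_simp
    _ = C * ((1 + 2 * (2 * c) ^ (β - n) * c ^ n) / c ^ j) * (M * δ ^ (β - j)) := by rw [hδj]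

lemma mul_div_rpow_rpow {M ε β τ : ℝ} (hM : 0 < M) (hε : 0 < ε) (hβ : β ≠ 0) :
    M * ((ε / M) ^ (1 / β)) ^ (β - τ) = M ^ (τ / β) * ε ^ ((β - τ) / β) := by
  have hexp : τ / β = 1 - (β - τ) / β := by field_simp; ring
  rw [← Real.rpow_mul (by positivity), one_div_mul_eq_div, Real.div_rpow hε.le hM.le, hexp,
    Real.rpow_sub hM, Real.rpow_one]
  ring

lemma exists_radius_eq_mul_rpow {β : ℝ} {τ : ℕ} (n : ℕ) (hτ : 1 ≤ τ) (hτβ : τ < β) :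
    ∃ c : ℝ, 0 < c ∧ ∀ M ε : ℝ, 0 < M → 0 < ε →
      (τ * ε * n.factorial / (2 * M * (β - τ))) ^ (1 / β) = c * (ε / M) ^ (1 / β) := by
  have hβτ : 0 < β - τ := sub_pos.2 hτβ
  refine ⟨(τ * n.factorial / (2 * (β - τ))) ^ (1 / β), by positivity, fun M ε hM hε => ?_⟩
  rw [← Real.mul_rpow (by positivity) (by positivity)]
  congr 1
  field_simp

end HolderInterpolation

theorem stmt_0_general (β c : ℝ) (τ fl : ℕ) (hτ1 : 1 ≤ τ) (hτβ : (τ : ℝ) < β)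
    (hfl1 : (fl : ℝ) < β) (hfl2 : β ≤ fl + 1) (hc : 0 < c) :
    ∃ C : ℝ, 0 < C ∧
      ∀ (m : ℕ) (Ω : Set (EuclideanSpace ℝ (Fin m))), IsOpen Ω →
      ∀ M ε : ℝ, 0 < M → 0 < ε →
      ∀ u v : EuclideanSpace ℝ (Fin m) → ℝ,
        HolderBall β fl Ω M u → HolderBall β fl Ω M v →
        (∀ x ∈ Ω, |u x - v x| ≤ ε) →
        ∀ k : Fin m → ℕ, (∑ i, k i) ≤ τ →
        ∀ x, Metric.ball x (c * (ε / M) ^ (1 / β)) ⊆ Ω →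
          |mDeriv k u x - mDeriv k v x| ≤ C * M ^ ((τ : ℝ) / β) * ε ^ ((β - τ) / β) := by
  have hβ : 0 < β := (Nat.cast_nonneg τ).trans_lt hτβ
  have hτfl : τ ≤ fl := Nat.lt_succ_iff.1 (by exact_mod_cast hτβ.trans_le hfl2)
  choose! C _ hinterp using fun j (hj : j ≤ τ) =>
    HolderBall.exists_abs_mDeriv_sub_le hfl1 (hj.trans hτfl) hc
  obtain ⟨D, hD⟩ := ((Finset.range (τ + 1)).image C).exists_le
  refine ⟨max 2 D, by positivity, fun m Ω hΩ M ε hM hε u v hu hv huv k hk x hx => ?_⟩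
  rw [mul_assoc, ← mul_div_rpow_rpow hM hε hβ.ne']
  have hMδ : M * ((ε / M) ^ (1 / β)) ^ β = ε := by
    simpa [hβ.ne'] using mul_div_rpow_rpow (τ := 0) hM hε hβ.ne'
  set δ : ℝ := (ε / M) ^ (1 / β)
  have hδ : 0 < δ := by positivity
  have hxΩ : x ∈ Ω := hx (Metric.mem_ball_self (by positivity))
  rcases le_total 1 δ with hδ1 | hδ1
  · have hbound {w} (hw : HolderBall β fl Ω M w) : |mDeriv k w x| ≤ M :=
      hw.abs_mDeriv_le hΩ (by omega) (hk.trans hτfl) hxΩ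
    calc |mDeriv k u x - mDeriv k v x| ≤ 2 * (M * 1) := by
          linarith [abs_sub (mDeriv k u x) (mDeriv k v x), hbound hu, hbound hv]
      _ ≤ max 2 D * (M * δ ^ (β - τ)) := by
          gcongr
          · exact le_max_left 2 D
          · exact Real.one_le_rpow hδ1 (sub_pos.2 hτβ).le
  · have hCD : C (∑ i, k i) ≤ max 2 D :=
      (hD _ (Finset.mem_image_of_mem C (Finset.mem_range_succ_iff.2 hk))).trans (le_max_right 2 D)
    calc |mDeriv k u x - mDeriv k v x| ≤ C (∑ i, k i) * (M * δ ^ (β - (∑ i, k i : ℕ))) :=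
          hinterp _ hk m Ω hΩ M δ hM hδ u v hu hv (fun y hy => hMδ ▸ huv y hy) k rfl x hx
      _ ≤ max 2 D * (M * δ ^ (β - τ)) := by
          gcongr ?_ * (M * ?_)
          exact Real.rpow_le_rpow_of_exponent_ge hδ hδ1 (by gcongr)

/-- If `u, ũ ∈ C^β(Ω, M)` are uniformly `ε`-close on `Ω`, then for every multi-index
`|k| ≤ τ < β` and every `x ∈ int_ᾱ(Ω)` with `ᾱ = (τ ε ⌊β⌋!/(2M(β−τ)))^{1/β}`,
`|D^k u(x) − D^k ũ(x)| ≤ C M^{τ/β} ε^{(β−τ)/β}`, with `C` depending only on `τ` and `β`. -/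
theorem stmt_0 (β : ℝ) (hβ : 1 < β) (τ fl : ℕ) (hτ1 : 1 ≤ τ) (hτβ : (τ : ℝ) < β)
    (hfl1 : (fl : ℝ) < β) (hfl2 : β ≤ fl + 1) :
    ∃ C : ℝ, 0 < C ∧
      ∀ (m : ℕ) (Ω : Set (EuclideanSpace ℝ (Fin m))), IsOpen Ω → Bornology.IsBounded Ω →
      ∀ M ε : ℝ, 0 < M → 0 < ε →
      ∀ u v : EuclideanSpace ℝ (Fin m) → ℝ,
        HolderBall β fl Ω M u → HolderBall β fl Ω M v →
        (∀ x ∈ Ω, |u x - v x| ≤ ε) →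
        ∀ k : Fin m → ℕ, (∑ i, k i) ≤ τ →
        ∀ x ∈ Ω,
          Metric.ball x ((τ * ε * (Nat.factorial fl) / (2 * M * (β - τ))) ^ (1 / β)) ⊆ Ω →
          |mDeriv k u x - mDeriv k v x| ≤ C * M ^ ((τ : ℝ) / β) * ε ^ ((β - τ) / β) := by
  obtain ⟨c, hc, hradius⟩ := exists_radius_eq_mul_rpow fl hτ1 hτβ
  obtain ⟨C, hC, hbound⟩ := stmt_0_general β c τ fl hτ1 hτβ hfl1 hfl2 hc
  exact ⟨C, hC, fun m Ω hΩ _ M ε hM hε u v hu hv huv k hk x _ hx =>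
    hbound m Ω hΩ M ε hM hε u v hu hv huv k hk x (hradius M ε hM hε ▸ hx)⟩
end

section
/- Let Ω ⊆ ℝ^m be a bounded open set equipped with a Borel probability measure ν, let Θ ⊆ ℝ^d be compact, and let Γ : Θ → (bounded continuous functions on Ω) satisfy sup_{x∈Ω} |Γ(θ₁)(x) − Γ(θ₂)(x)| ≤ L ‖θ₁ − θ₂‖₂ for all θ₁, θ₂ ∈ Θ. Fix θ⋆ ∈ Θ, set u⋆ = Γ(θ⋆), and fix σ > 0. For each n, let (s₁, Y₁),…,(s_n, Y_n) be i.i.d. with s_i ∼ ν and Y_i = u⋆(s_i) + σ ξ_i, where ξ₁,…,ξ_n are i.i.d. standard Gaussian random variables independent of (s₁,…,s_n). Then for every η > 0 there exist K > 0 and N such that for all n ≥ N and for every random element û_n of Γ(Θ) satisfying Σ_{i=1}^n (Y_i − û_n(s_i))² = min_{u ∈ Γ(Θ)} Σ_{i=1}^n (Y_i − u(s_i))², one has P( ∫_Ω (û_n(x) − u⋆(x))² ν(dx) > K (d/n) log(n/d) ) ≤ η. -/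
open MeasureTheory ProbabilityTheory

/-!
Since `θstar` competes in the minimization, the minimizer has nonpositive empirical excess loss.
For fixed `θ` and `g = Γ θ - Γ θstar`, with `L²(ν)` norm `‖g‖`, sub-Gaussian noise and bounded `g`
give the excess loss a Laplace transform at most `exp (-κ ‖g‖²)`, so a small empirical excess loss
has probability at most about `exp (-n κ ‖g‖²)`: the exponent is linear, not quadratic, in `‖g‖²`,
and this is what makes the rate fast. On a net of `Θ` at scale `1 / n`, which has `O(n ^ d)` points,
moving the minimizer to the nearest net point changes the summed excess loss by `O(1)`, by
Lipschitz continuity, as long as the average of the noise is bounded. At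
`‖g‖² = (2 / κ) (d / n) log (n / d)` each net point contributes `O(n ^ (-2 d))`, so the union bound
over the net is `O(n ^ (-d))`.
-/

open Filter Metric Module Topology
open scoped ENNReal NNReal

section Covering

variable {X : Type*} [PseudoMetricSpace X] {d : ℝ} {Θ : Set X}

/-- Sets whose metric entropy dimension is at most `d`: their `ε`-covering numbers are
`O(ε ^ (-d))`, with the range of scales normalized to `0 < ε ≤ 1`. -/
def HasPolynomialCovering (d : ℝ) (Θ : Set X) : Prop :=
  ∃ C : ℝ, ∀ ε : ℝ≥0, 0 < ε → ε ≤ 1 →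
    (coveringNumber ε Θ : ℝ≥0∞) ≤ ENNReal.ofReal (C * (ε : ℝ) ^ (-d))

namespace HasPolynomialCovering

lemma exists_finset_isCover (hΘ : HasPolynomialCovering d Θ) :
    ∃ C : ℝ, ∀ ε : ℝ≥0, 0 < ε → ε ≤ 1 → ∃ T : Finset X,
      (T : Set X) ⊆ Θ ∧ IsCover ε Θ (T : Set X) ∧ (T.card : ℝ) ≤ C * (ε : ℝ) ^ (-d) := by
  obtain ⟨C, hC⟩ := hΘ
  refine ⟨max C 0, fun ε hε hε1 => ?_⟩
  have hfin : coveringNumber ε Θ ≠ ⊤ := fun h => by simpa [h] using hC ε hε hε1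
  obtain ⟨T, hTΘ, hTfin, hTcover, hTcard⟩ := exists_set_encard_eq_coveringNumber hfin
  lift T to Finset X using hTfin
  refine ⟨T, hTΘ, hTcover, ?_⟩
  have hcard := hC ε hε hε1
  rw [← hTcard, Set.encard_coe_eq_coe_finsetCard] at hcard
  have hmax : C * (ε : ℝ) ^ (-d) ≤ max C 0 * (ε : ℝ) ^ (-d) := by gcongr; exact le_max_left C 0
  exact ENNReal.toReal_le_of_le_ofReal (by positivity)
    (hcard.trans (ENNReal.ofReal_le_ofReal hmax))

lemma isBounded (hΘ : HasPolynomialCovering d Θ) : Bornology.IsBounded Θ := by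
  obtain ⟨_, hC⟩ := hΘ.exists_finset_isCover
  obtain ⟨T, -, hT, -⟩ := hC 1 one_pos le_rfl
  exact ((Bornology.isBounded_biUnion T.finite_toSet).2 fun _ _ => isBounded_closedBall).subset
    (isCover_iff_subset_iUnion_closedBall.1 hT)

end HasPolynomialCovering

section FiniteDimensional

variable {V : Type*} [NormedAddCommGroup V] [NormedSpace ℝ V] [FiniteDimensional ℝ V]

/- Volume comparison: the balls of radius `ε / 2` around the points of `C` are disjoint and
contained in the ball of radius `R + ε / 2`. -/
lemma encard_le_of_isSeparated_of_subset_closedBall {C : Set V} {x : V} {ε R : ℝ≥0} (hε : 0 < ε)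
    (hsep : IsSeparated ε C) (hC : C ⊆ closedBall x R) :
    (C.encard : ℝ≥0∞) ≤ ENNReal.ofReal ((1 + 2 * R / ε) ^ finrank ℝ V) := by
  borelize V
  let vol : Measure V := Measure.addHaar
  have hε2 : 0 < (ε : ℝ) / 2 := by positivity
  have hdisj : Pairwise (Function.onFun Disjoint fun c : C => ball (c : V) (ε / 2)) := by
    intro c c' hcc'
    have hlt : (ε : ℝ≥0∞) < edist (c : V) c' :=
      hsep c.2 c'.2 (Subtype.coe_injective.ne hcc')
    rw [edist_nndist, ENNReal.coe_lt_coe, ← NNReal.coe_lt_coe, coe_nndist] at hlt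
    exact ball_disjoint_ball (by linarith)
  have hsub : ⋃ c : C, ball (c : V) (ε / 2) ⊆ ball x ((1 + 2 * R / ε) * (ε / 2)) := by
    refine Set.iUnion_subset fun c => ball_subset_ball' ?_
    have hcx : dist (c : V) x ≤ R := hC c.2
    have hradius : (1 + 2 * R / ε) * (ε / 2) = (ε : ℝ) / 2 + R := by
      have : (ε : ℝ) ≠ 0 := by positivity
      field_simp
    linarith
  have hvol : C.encard * vol (ball 0 (ε / 2)) ≤
      ENNReal.ofReal ((1 + 2 * R / ε) ^ finrank ℝ V) * vol (ball 0 (ε / 2)) := calc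
    _ = ∑' c : C, vol (ball (c : V) (ε / 2)) := by
      simp only [Measure.addHaar_ball_center, ENNReal.tsum_set_const, vol]
    _ ≤ vol (⋃ c : C, ball (c : V) (ε / 2)) :=
      tsum_meas_le_meas_iUnion_of_disjoint _ (fun _ => measurableSet_ball) hdisj
    _ ≤ vol (ball x ((1 + 2 * R / ε) * (ε / 2))) := measure_mono hsub
    _ = _ := vol.addHaar_ball_mul_of_pos x (by positivity) _
  exact (ENNReal.mul_le_mul_iff_left (measure_ball_pos vol 0 hε2).ne' measure_ball_lt_top.ne).1 hvol

lemma coveringNumber_le_of_subset_closedBall {A : Set V} {x : V} {ε R : ℝ≥0} (hε : 0 < ε)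
    (hA : A ⊆ closedBall x R) :
    (coveringNumber ε A : ℝ≥0∞) ≤ ENNReal.ofReal ((1 + 2 * R / ε) ^ finrank ℝ V) := by
  have hpack : packingNumber ε A ≤ ENat.floor (ENNReal.ofReal ((1 + 2 * R / ε) ^ finrank ℝ V)) :=
    iSup₂_le fun C hCA => iSup_le fun hsep => ENat.le_floor.2
      (encard_le_of_isSeparated_of_subset_closedBall hε hsep (hCA.trans hA))
  exact ENat.le_floor.1 ((coveringNumber_le_packingNumber ε A).trans hpack)

lemma hasPolynomialCovering_of_isBounded {A : Set V} (hA : Bornology.IsBounded A) :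
    HasPolynomialCovering (finrank ℝ V) A := by
  obtain ⟨R, hR⟩ := hA.subset_closedBall 0
  refine ⟨(1 + 2 * R.toNNReal) ^ finrank ℝ V, fun ε hε hε1 => ?_⟩
  refine (coveringNumber_le_of_subset_closedBall hε
    (hR.trans (closedBall_subset_closedBall R.le_coe_toNNReal))).trans (ENNReal.ofReal_le_ofReal ?_)
  rw [Real.rpow_neg ε.coe_nonneg, Real.rpow_natCast, ← div_eq_mul_inv, ← div_pow]
  gcongr
  rw [add_div]
  gcongr
  exact (one_le_div (by positivity)).2 (by exact_mod_cast hε1)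

end FiniteDimensional

end Covering

section IdenticallyDistributed

variable {F Ω₀ : Type*} [MeasurableSpace F] [MeasurableSpace Ω₀] {P : Measure Ω₀}

lemma integrable_exp_mul_sum_of_aemeasurable {ι : Type*} {X : ι → Ω₀ → ℝ} {I : Finset ι} {t : ℝ}
    (hindep : iIndepFun X P) (hX : ∀ i, AEMeasurable (X i) P)
    (hint : ∀ i ∈ I, Integrable (fun ω => Real.exp (t * X i ω)) P) :
    Integrable (fun ω => Real.exp (t * (∑ i ∈ I, X i) ω)) P := by
  have := hindep.isProbabilityMeasure
  have hmk : ∀ i, X i =ᵐ[P] (hX i).mk (X i) := fun i => (hX i).ae_eq_mk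
  have hsum : ∑ i ∈ I, X i =ᵐ[P] ∑ i ∈ I, (hX i).mk (X i) := eventuallyEq_sum fun i _ => hmk i
  have hint' : ∀ i ∈ I, Integrable (fun ω => Real.exp (t * (hX i).mk (X i) ω)) P := fun i hi =>
    (hint i hi).congr ((hmk i).fun_comp fun y => Real.exp (t * y))
  exact ((hindep.congr hmk).integrable_exp_mul_sum (fun i => (hX i).measurable_mk) hint').congr
    (hsum.symm.fun_comp fun y => Real.exp (t * y))

variable {π : Measure F} {Z : ℕ → Ω₀ → F} {f : F → ℝ}

lemma measureReal_sum_le_le_exp_mul_mgf_pow {t : ℝ} (hindep : iIndepFun Z P)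
    (hZ : ∀ i, HasLaw (Z i) π P) (ht : t ≤ 0) (hf : AEMeasurable f π)
    (hint : Integrable (fun z => Real.exp (t * f z)) π) (n : ℕ) (a : ℝ) :
    P.real {ω | ∑ i ∈ Finset.range n, f (Z i ω) ≤ a} ≤ Real.exp (-t * a) * mgf f π t ^ n := by
  have := hindep.isProbabilityMeasure
  have hfmap : ∀ i, AEMeasurable f (P.map (Z i)) := fun i => (hZ i).map_eq ▸ hf
  have hfZ : ∀ i, AEMeasurable (f ∘ Z i) P := fun i =>
    (hfmap i).comp_aemeasurable (hZ i).aemeasurable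
  have hindep' : iIndepFun (fun i => f ∘ Z i) P :=
    hindep.comp₀ _ (fun i => (hZ i).aemeasurable) hfmap
  have hmgf : ∀ i, mgf (f ∘ Z i) P t = mgf f π t := fun i => by
    rw [← (hZ i).map_eq, mgf_map (hZ i).aemeasurable]
    exact (hZ i).map_eq ▸ hint.aestronglyMeasurable
  have hintmap : ∀ i, Integrable (fun z => Real.exp (t * f z)) (P.map (Z i)) := fun i =>
    (hZ i).map_eq ▸ hint
  have hintZ : ∀ i, Integrable (fun ω => Real.exp (t * (f ∘ Z i) ω)) P := fun i =>
    (hintmap i).comp_aemeasurable (hZ i).aemeasurable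
  calc P.real {ω | ∑ i ∈ Finset.range n, f (Z i ω) ≤ a}
      = P.real {ω | (∑ i ∈ Finset.range n, f ∘ Z i) ω ≤ a} := by
        simp only [Finset.sum_apply, Function.comp_apply]
    _ ≤ Real.exp (-t * a) * mgf (∑ i ∈ Finset.range n, f ∘ Z i) P t :=
        measure_le_le_exp_mul_mgf a ht
          (integrable_exp_mul_sum_of_aemeasurable hindep' hfZ fun i _ => hintZ i)
    _ = Real.exp (-t * a) * mgf f π t ^ n := by
        rw [hindep'.mgf_sum₀ hfZ]
        simp only [hmgf, Finset.prod_const, Finset.card_range]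

lemma measureReal_mul_le_sum_le_integral_div (hZ : ∀ i, HasLaw (Z i) π P) (hf : 0 ≤ f)
    (hint : Integrable f π) {n : ℕ} (hn : 0 < n) {M : ℝ} (hM : 0 < M) :
    P.real {ω | n * M ≤ ∑ i ∈ Finset.range n, f (Z i ω)} ≤ (∫ z, f z ∂π) / M := by
  have hintZ : ∀ i, Integrable (fun ω => f (Z i ω)) P := fun i =>
    Integrable.comp_aemeasurable ((hZ i).map_eq ▸ hint) (hZ i).aemeasurable
  have hmean : ∫ ω, ∑ i ∈ Finset.range n, f (Z i ω) ∂P = n * ∫ z, f z ∂π := by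
    rw [integral_finsetSum _ fun i _ => hintZ i]
    have hmean_i : ∀ i, ∫ ω, f (Z i ω) ∂P = ∫ z, f z ∂π := fun i =>
      (hZ i).integral_comp hint.aestronglyMeasurable
    simp only [hmean_i, Finset.sum_const, Finset.card_range, nsmul_eq_mul]
  have hmarkov := mul_meas_ge_le_integral_of_nonneg
    (ae_of_all P fun ω => Finset.sum_nonneg fun i _ => hf (Z i ω))
    (integrable_finsetSum (Finset.range n) fun i _ => hintZ i) (n * M)
  rw [hmean, mul_assoc] at hmarkov
  rw [le_div_iff₀' hM]
  exact le_of_mul_le_mul_left hmarkov (by exact_mod_cast hn)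

end IdenticallyDistributed

section ExcessLoss

variable {E : Type*} {σ : ℝ}

/-- The squared loss of `u + g` minus that of `u` at an observation `(x, u x + σ * y)` of the
regression function `u`, as a function of the pair `(x, y)`; it does not depend on `u`. -/
def excessLoss (σ : ℝ) (g : E → ℝ) (p : E × ℝ) : ℝ :=
  (σ * p.2 - g p.1) ^ 2 - (σ * p.2) ^ 2

lemma excessLoss_eq (σ : ℝ) (g : E → ℝ) (p : E × ℝ) :
    excessLoss σ g p = g p.1 ^ 2 - 2 * σ * p.2 * g p.1 := by
  unfold excessLoss
  ring

lemma excessLoss_le_add {g g' : E → ℝ} {p : E × ℝ} {B ε : ℝ} (hg : |g p.1| ≤ B)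
    (hg' : |g' p.1| ≤ B) (hgg' : |g p.1 - g' p.1| ≤ ε) :
    excessLoss σ g' p ≤ excessLoss σ g p + ε * (2 * B + 2 * |σ| * |p.2|) := by
  have hfactor : excessLoss σ g' p - excessLoss σ g p =
      (g p.1 - g' p.1) * (2 * σ * p.2 - (g p.1 + g' p.1)) := by
    unfold excessLoss
    ring
  have hsecond : |2 * σ * p.2 - (g p.1 + g' p.1)| ≤ 2 * B + 2 * |σ| * |p.2| := calc
    _ ≤ |2 * σ * p.2| + (|g p.1| + |g' p.1|) :=
      (abs_sub _ _).trans (by gcongr; exact abs_add_le _ _)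
    _ ≤ 2 * B + 2 * |σ| * |p.2| := by
      rw [abs_mul, abs_mul, abs_two]
      linarith
  suffices excessLoss σ g' p - excessLoss σ g p ≤ ε * (2 * B + 2 * |σ| * |p.2|) by linarith
  calc excessLoss σ g' p - excessLoss σ g p
      ≤ |g p.1 - g' p.1| * |2 * σ * p.2 - (g p.1 + g' p.1)| := by
        rw [hfactor, ← abs_mul]
        exact le_abs_self _
    _ ≤ ε * (2 * B + 2 * |σ| * |p.2|) :=
        mul_le_mul hgg' hsecond (abs_nonneg _) ((abs_nonneg _).trans hgg')

lemma sum_excessLoss_le_add {ι : Type*} {I : Finset ι} {z : ι → E × ℝ} {g g' : E → ℝ} {B ε : ℝ}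
    (hg : ∀ i ∈ I, |g (z i).1| ≤ B) (hg' : ∀ i ∈ I, |g' (z i).1| ≤ B)
    (hgg' : ∀ i ∈ I, |g (z i).1 - g' (z i).1| ≤ ε) :
    ∑ i ∈ I, excessLoss σ g' (z i) ≤
      ∑ i ∈ I, excessLoss σ g (z i) + ε * (2 * B * I.card + 2 * |σ| * ∑ i ∈ I, |(z i).2|) := calc
  _ ≤ ∑ i ∈ I, (excessLoss σ g (z i) + ε * (2 * B + 2 * |σ| * |(z i).2|)) :=
    Finset.sum_le_sum fun i hi => excessLoss_le_add (hg i hi) (hg' i hi) (hgg' i hi)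
  _ = _ := by
    simp only [Finset.sum_add_distrib, ← Finset.mul_sum, Finset.sum_const, nsmul_eq_mul,
      mul_comm (I.card : ℝ)]
    ring

lemma exp_neg_le_one_sub_div {x b : ℝ} (hx : 0 ≤ x) (hxb : x ≤ b) :
    Real.exp (-x) ≤ 1 - x / (1 + b) := by
  have : 0 < 1 + x := by linarith
  calc Real.exp (-x) ≤ 1 / (1 + x) := by
        rw [Real.exp_neg, ← one_div]
        gcongr
        linarith [Real.add_one_le_exp x]
    _ = 1 - x / (1 + x) := by field_simp; ring
    _ ≤ 1 - x / (1 + b) := by gcongr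

section Mgf

variable {μ : Measure ℝ} {v : ℝ≥0} {l B : ℝ}

lemma integral_exp_neg_mul_excessLoss_le (hμ : HasSubgaussianMGF id v μ) (hl : 0 ≤ l)
    (hσl : 4 * σ ^ 2 * v * l ≤ 1) (g : E → ℝ) (x : E) :
    ∫ y, Real.exp (-l * excessLoss σ g (x, y)) ∂μ ≤ Real.exp (-(l / 2 * g x ^ 2)) := calc
  _ = ∫ y, Real.exp (-l * g x ^ 2) * Real.exp (2 * l * σ * g x * y) ∂μ := by
    refine integral_congr_ae (.of_forall fun y => ?_)
    simp only [excessLoss_eq, ← Real.exp_add]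
    ring_nf
  _ = Real.exp (-l * g x ^ 2) * mgf id μ (2 * l * σ * g x) := integral_const_mul _ _
  _ ≤ Real.exp (-l * g x ^ 2) * Real.exp (v * (2 * l * σ * g x) ^ 2 / 2) := by
    gcongr
    exact hμ.mgf_le _
  _ ≤ Real.exp (-(l / 2 * g x ^ 2)) := by
    rw [← Real.exp_add, Real.exp_le_exp]
    linarith [mul_le_mul_of_nonneg_right hσl (by positivity : 0 ≤ l / 2 * g x ^ 2)]

variable [MeasurableSpace E] {ν : Measure E} {g : E → ℝ}

lemma aemeasurable_excessLoss [SFinite μ] (hg : AEMeasurable g ν) :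
    AEMeasurable (excessLoss σ g) (ν.prod μ) := by
  have := hg.comp_fst (ν := μ)
  unfold excessLoss
  fun_prop

lemma integrable_sq_of_ae_abs_le [IsFiniteMeasure ν] (hg : AEMeasurable g ν)
    (hgB : ∀ᵐ x ∂ν, |g x| ≤ B) : Integrable (fun x => g x ^ 2) ν :=
  .of_bound (hg.pow_const 2).aestronglyMeasurable (B ^ 2) <| hgB.mono fun x hx => by
    rw [Real.norm_eq_abs, abs_pow]
    gcongr

variable [IsProbabilityMeasure ν]

lemma integrable_exp_mul_excessLoss [SFinite μ] (hμ : HasSubgaussianMGF id v μ)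
    (hg : AEMeasurable g ν) (hgB : ∀ᵐ x ∂ν, |g x| ≤ B) (hl : 0 ≤ l) :
    Integrable (fun p => Real.exp (-l * excessLoss σ g p)) (ν.prod μ) := by
  have hdom : Integrable (fun p : E × ℝ => Real.exp (2 * l * |σ| * B * |p.2|)) (ν.prod μ) :=
    (integrable_exp_mul_abs (X := id) (hμ.integrable_exp_mul (2 * l * |σ| * B))
      (hμ.integrable_exp_mul (-(2 * l * |σ| * B)))).comp_snd ν
  refine hdom.mono' ((aemeasurable_excessLoss hg).const_mul (-l)).exp.aestronglyMeasurable ?_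
  filter_upwards [Measure.quasiMeasurePreserving_fst.ae hgB] with p hp
  rw [Real.norm_eq_abs, Real.abs_exp, Real.exp_le_exp, excessLoss_eq]
  have hcross : σ * p.2 * g p.1 ≤ |σ| * |p.2| * B := calc
    _ ≤ |σ * p.2 * g p.1| := le_abs_self _
    _ ≤ |σ| * |p.2| * B := by
      rw [abs_mul, abs_mul]
      gcongr
  linarith [mul_le_mul_of_nonneg_left hcross hl, mul_nonneg hl (sq_nonneg (g p.1))]

/-- The exponent `κ` in the Chernoff bound for the excess loss: with `l` the Chernoff parameter and
`B` a bound on `|g|`, the Laplace transform of the excess loss at `l` is at most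
`exp (-κ * ∫ x, g x ^ 2 ∂ν)`. -/
noncomputable def excessLossRate (l B : ℝ) : ℝ := l / 2 / (1 + l / 2 * B ^ 2)

lemma excessLossRate_pos (hl : 0 < l) (B : ℝ) : 0 < excessLossRate l B := by
  unfold excessLossRate
  positivity

lemma mgf_excessLoss_le [SFinite μ] (hμ : HasSubgaussianMGF id v μ)
    (hg : AEMeasurable g ν) (hgB : ∀ᵐ x ∂ν, |g x| ≤ B) (hl : 0 ≤ l)
    (hσl : 4 * σ ^ 2 * v * l ≤ 1) :
    mgf (excessLoss σ g) (ν.prod μ) (-l) ≤ Real.exp (-(excessLossRate l B * ∫ x, g x ^ 2 ∂ν)) := by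
  have hint := integrable_exp_mul_excessLoss (σ := σ) hμ hg hgB hl
  have hsq := integrable_sq_of_ae_abs_le hg hgB
  have hinner : ∀ᵐ x ∂ν, ∫ y, Real.exp (-l * excessLoss σ g (x, y)) ∂μ ≤
      1 - excessLossRate l B * g x ^ 2 := hgB.mono fun x hx => calc
    _ ≤ Real.exp (-(l / 2 * g x ^ 2)) := integral_exp_neg_mul_excessLoss_le hμ hl hσl g x
    _ ≤ 1 - l / 2 * g x ^ 2 / (1 + l / 2 * B ^ 2) := by
      refine exp_neg_le_one_sub_div (by positivity) ?_
      gcongr l / 2 * ?_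
      exact sq_le_sq.2 (hx.trans (le_abs_self B))
    _ = 1 - excessLossRate l B * g x ^ 2 := by unfold excessLossRate; ring
  calc mgf (excessLoss σ g) (ν.prod μ) (-l)
      = ∫ x, ∫ y, Real.exp (-l * excessLoss σ g (x, y)) ∂μ ∂ν := integral_prod _ hint
    _ ≤ ∫ x, (1 - excessLossRate l B * g x ^ 2) ∂ν :=
        integral_mono_ae hint.integral_prod_left (by fun_prop) hinner
    _ = 1 - excessLossRate l B * ∫ x, g x ^ 2 ∂ν := by
        rw [integral_sub (integrable_const _) (hsq.const_mul _), integral_const_mul]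
        simp only [integral_const, probReal_univ, smul_eq_mul, mul_one]
    _ ≤ _ := Real.one_sub_le_exp_neg _

end Mgf

end ExcessLoss

section FiniteSample

variable {E Ω₀ : Type*} [MeasurableSpace E] [MeasurableSpace Ω₀] {P : Measure Ω₀}
  {ν : Measure E} [IsProbabilityMeasure ν] {μ : Measure ℝ} [IsProbabilityMeasure μ] {v : ℝ≥0}
  {Z : ℕ → Ω₀ → E × ℝ} {σ l B : ℝ}

lemma measureReal_sum_excessLoss_le_le {g : E → ℝ} (hindep : iIndepFun Z P)
    (hZ : ∀ i, HasLaw (Z i) (ν.prod μ) P) (hμ : HasSubgaussianMGF id v μ) (hl : 0 ≤ l)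
    (hσl : 4 * σ ^ 2 * v * l ≤ 1) (hg : AEMeasurable g ν) (hgB : ∀ᵐ x ∂ν, |g x| ≤ B)
    (n : ℕ) (t : ℝ) :
    P.real {ω | ∑ i ∈ Finset.range n, excessLoss σ g (Z i ω) ≤ t} ≤
      Real.exp (l * t - n * (excessLossRate l B * ∫ x, g x ^ 2 ∂ν)) := calc
  _ ≤ Real.exp (- -l * t) * mgf (excessLoss σ g) (ν.prod μ) (-l) ^ n :=
    measureReal_sum_le_le_exp_mul_mgf_pow hindep hZ (neg_nonpos.2 hl) (aemeasurable_excessLoss hg)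
      (integrable_exp_mul_excessLoss hμ hg hgB hl) n t
  _ ≤ Real.exp (- -l * t) * Real.exp (-(excessLossRate l B * ∫ x, g x ^ 2 ∂ν)) ^ n := by
    gcongr
    · exact mgf_nonneg
    · exact mgf_excessLoss_le hμ hg hgB hl hσl
  _ = _ := by
    rw [← Real.exp_nat_mul, ← Real.exp_add]
    ring_nf

lemma measureReal_exists_sum_excessLoss_le_le {X : Type*} {g : X → E → ℝ} {T : Finset X}
    (hindep : iIndepFun Z P) (hZ : ∀ i, HasLaw (Z i) (ν.prod μ) P)
    (hμ : HasSubgaussianMGF id v μ) (hl : 0 < l) (hσl : 4 * σ ^ 2 * v * l ≤ 1)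
    (hg : ∀ θ ∈ T, AEMeasurable (g θ) ν) (hgB : ∀ θ ∈ T, ∀ᵐ x ∂ν, |g θ x| ≤ B)
    (n : ℕ) (r t : ℝ) :
    P.real {ω | ∃ θ ∈ T, r ≤ ∫ x, g θ x ^ 2 ∂ν ∧
        ∑ i ∈ Finset.range n, excessLoss σ (g θ) (Z i ω) ≤ t} ≤
      T.card * Real.exp (l * t - n * (excessLossRate l B * r)) := by
  have := hindep.isProbabilityMeasure
  have hκ := (excessLossRate_pos hl B).le
  let small (θ : X) : Set Ω₀ := {ω | r ≤ ∫ x, g θ x ^ 2 ∂ν ∧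
    ∑ i ∈ Finset.range n, excessLoss σ (g θ) (Z i ω) ≤ t}
  have hsingle : ∀ θ ∈ T, P.real (small θ) ≤
      Real.exp (l * t - n * (excessLossRate l B * r)) := fun θ hθ => by
    by_cases hr : r ≤ ∫ x, g θ x ^ 2 ∂ν
    · simp only [small, hr, true_and]
      refine (measureReal_sum_excessLoss_le_le hindep hZ hμ hl.le hσl (hg θ hθ) (hgB θ hθ)
        n t).trans ?_
      gcongr
    · simp only [small, hr, false_and, Set.ofPred_false, measureReal_empty]
      positivity
  calc _ = P.real (⋃ θ ∈ T, small θ) := by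
        congr 1
        ext ω
        simp only [small, Set.mem_ofPred_eq, Set.mem_iUnion, exists_prop]
    _ ≤ ∑ θ ∈ T, P.real (small θ) := measureReal_biUnion_finset_le _ _
    _ ≤ T.card * Real.exp (l * t - n * (excessLossRate l B * r)) :=
        (Finset.sum_le_card_nsmul _ _ _ hsingle).trans_eq (nsmul_eq_mul _ _)

lemma integral_sq_le_integral_sq_add {g g' : E → ℝ} {ε : ℝ} (hg : AEMeasurable g ν)
    (hg' : AEMeasurable g' ν) (hgB : ∀ᵐ x ∂ν, |g x| ≤ B) (hgB' : ∀ᵐ x ∂ν, |g' x| ≤ B)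
    (hgg' : ∀ᵐ x ∂ν, |g x - g' x| ≤ ε) :
    ∫ x, g x ^ 2 ∂ν ≤ ∫ x, g' x ^ 2 ∂ν + 2 * B * ε := by
  have hsq := integrable_sq_of_ae_abs_le hg hgB
  have hsq' := integrable_sq_of_ae_abs_le hg' hgB'
  have hpoint : ∀ᵐ x ∂ν, g x ^ 2 ≤ g' x ^ 2 + 2 * B * ε := by
    filter_upwards [hgB, hgB', hgg'] with x hx hx' hxx'
    calc g x ^ 2 = g' x ^ 2 + (g x + g' x) * (g x - g' x) := by ring
      _ ≤ g' x ^ 2 + |g x + g' x| * |g x - g' x| := by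
        rw [← abs_mul]
        gcongr
        exact le_abs_self _
      _ ≤ g' x ^ 2 + 2 * B * ε := by
        have hadd : |g x + g' x| ≤ 2 * B := (abs_add_le _ _).trans (by linarith)
        gcongr
        exact (abs_nonneg _).trans hadd
  calc ∫ x, g x ^ 2 ∂ν ≤ ∫ x, (g' x ^ 2 + 2 * B * ε) ∂ν :=
        integral_mono_ae hsq (hsq'.add (integrable_const _)) hpoint
    _ = ∫ x, g' x ^ 2 ∂ν + 2 * B * ε := by
        rw [integral_add hsq' (integrable_const _)]
        simp only [integral_const, probReal_univ, smul_eq_mul, one_mul]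

section Net

variable {X : Type*} [PseudoMetricSpace X] {Θ : Set X} {g : X → E → ℝ} {L δ : ℝ≥0} {T : Finset X}

lemma exists_mem_net_excessLoss_le {n : ℕ} {z : ℕ → E × ℝ} {M r : ℝ} {θ : X}
    (hg : ∀ θ ∈ Θ, AEMeasurable (g θ) ν)
    (hLip : ∀ᵐ x ∂ν, LipschitzOnWith L (fun θ => g θ x) Θ)
    (hgB : ∀ᵐ x ∂ν, ∀ θ ∈ Θ, |g θ x| ≤ B) (hTΘ : (T : Set X) ⊆ Θ) (hT : IsCover δ Θ (T : Set X))
    (hzLip : ∀ i, LipschitzOnWith L (fun θ => g θ (z i).1) Θ)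
    (hzB : ∀ i, ∀ θ ∈ Θ, |g θ (z i).1| ≤ B) (hθ : θ ∈ Θ)
    (hmin : ∑ i ∈ Finset.range n, excessLoss σ (g θ) (z i) ≤ 0)
    (hM : ∑ i ∈ Finset.range n, |(z i).2| ≤ n * M) (hr : r ≤ ∫ x, g θ x ^ 2 ∂ν) :
    ∃ θ' ∈ T, r - 2 * B * (L * δ) ≤ ∫ x, g θ' x ^ 2 ∂ν ∧
      ∑ i ∈ Finset.range n, excessLoss σ (g θ') (z i) ≤
        n * (L * δ * (2 * B + 2 * |σ| * M)) := by
  obtain ⟨θ', hθ'T, hdist⟩ : ∃ θ' ∈ T, dist θ θ' ≤ δ := by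
    simpa only [Set.mem_iUnion, exists_prop, mem_closedBall, SetLike.mem_coe] using
      hT.subset_iUnion_closedBall hθ
  have hθ' : θ' ∈ Θ := hTΘ hθ'T
  have hclose : ∀ {x}, LipschitzOnWith L (fun θ => g θ x) Θ → |g θ x - g θ' x| ≤ L * δ :=
    fun hx => (hx.dist_le_mul θ hθ θ' hθ').trans (by gcongr)
  refine ⟨θ', hθ'T, ?_, ?_⟩
  · have := integral_sq_le_integral_sq_add (hg θ hθ) (hg θ' hθ') (hgB.mono fun x hx => hx θ hθ)
      (hgB.mono fun x hx => hx θ' hθ') (hLip.mono fun x hx => hclose hx)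
    linarith
  · calc ∑ i ∈ Finset.range n, excessLoss σ (g θ') (z i)
        ≤ ∑ i ∈ Finset.range n, excessLoss σ (g θ) (z i) +
            L * δ * (2 * B * (Finset.range n).card +
              2 * |σ| * ∑ i ∈ Finset.range n, |(z i).2|) :=
          sum_excessLoss_le_add (fun i _ => hzB i θ hθ) (fun i _ => hzB i θ' hθ')
            fun i _ => hclose (hzLip i)
      _ ≤ 0 + L * δ * (2 * B * n + 2 * |σ| * (n * M)) := by
          rw [Finset.card_range]
          gcongr
      _ = n * (L * δ * (2 * B + 2 * |σ| * M)) := by ring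

/- Off the event where the average of the noise `|(Z i).2|` exceeds `M`, a minimizer with large
`L²` error is within `δ` of a point of the net with large `L²` error and small excess loss. -/
lemma measureReal_lt_integral_sq_le (hindep : iIndepFun Z P)
    (hZ : ∀ i, HasLaw (Z i) (ν.prod μ) P) (hμ : HasSubgaussianMGF id v μ) (hl : 0 < l)
    (hσl : 4 * σ ^ 2 * v * l ≤ 1) (hg : ∀ θ ∈ Θ, AEMeasurable (g θ) ν)
    (hLip : ∀ᵐ x ∂ν, LipschitzOnWith L (fun θ => g θ x) Θ)
    (hgB : ∀ᵐ x ∂ν, ∀ θ ∈ Θ, |g θ x| ≤ B) (hTΘ : (T : Set X) ⊆ Θ) (hT : IsCover δ Θ (T : Set X))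
    {n : ℕ} (hn : 0 < n) {M : ℝ} (hM : 0 < M) {θhat : Ω₀ → X} (hθhat : ∀ᵐ ω ∂P, θhat ω ∈ Θ)
    (hmin : ∀ᵐ ω ∂P, ∑ i ∈ Finset.range n, excessLoss σ (g (θhat ω)) (Z i ω) ≤ 0) (r : ℝ) :
    P.real {ω | r < ∫ x, g (θhat ω) x ^ 2 ∂ν} ≤
      (∫ y, |y| ∂μ) / M + T.card * Real.exp (n * (l * (L * δ * (2 * B + 2 * |σ| * M)) -
        excessLossRate l B * (r - 2 * B * (L * δ)))) := by
  have := hindep.isProbabilityMeasure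
  let noisy : Set Ω₀ := {ω | n * M ≤ ∑ i ∈ Finset.range n, |(Z i ω).2|}
  let bad : Set Ω₀ := {ω | ∃ θ ∈ T, r - 2 * B * (L * δ) ≤ ∫ x, g θ x ^ 2 ∂ν ∧
    ∑ i ∈ Finset.range n, excessLoss σ (g θ) (Z i ω) ≤ n * (L * δ * (2 * B + 2 * |σ| * M))}
  have hdesign : ∀ᵐ ω ∂P, ∀ i, LipschitzOnWith L (fun θ => g θ (Z i ω).1) Θ ∧
      ∀ θ ∈ Θ, |g θ (Z i ω).1| ≤ B := ae_all_iff.2 fun i =>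
    ae_of_ae_map (hZ i).aemeasurable <| (hZ i).map_eq ▸
      Measure.quasiMeasurePreserving_fst.ae (hLip.and hgB)
  have hsubset : {ω | r < ∫ x, g (θhat ω) x ^ 2 ∂ν} ≤ᵐ[P] (noisy ∪ bad : Set Ω₀) := by
    filter_upwards [hdesign, hθhat, hmin] with ω hω hθ hωmin hr
    refine or_iff_not_imp_left.2 fun hquiet => ?_
    exact exists_mem_net_excessLoss_le hg hLip hgB hTΘ hT (fun i => (hω i).1) (fun i => (hω i).2)
      hθ hωmin (not_le.1 hquiet).le hr.le
  have hnoisy : P.real noisy ≤ (∫ y, |y| ∂μ) / M := by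
    have habs : Integrable (fun y => |y|) μ := (hμ.integrable).abs
    have hmean : ∫ p : E × ℝ, |p.2| ∂ν.prod μ = ∫ y, |y| ∂μ := by
      rw [integral_fun_snd fun y : ℝ => |y|, probReal_univ, one_smul]
    rw [← hmean]
    exact measureReal_mul_le_sum_le_integral_div hZ (fun p => abs_nonneg p.2) (habs.comp_snd ν)
      hn hM
  have hbad := measureReal_exists_sum_excessLoss_le_le (n := n) hindep hZ hμ hl hσl
    (fun θ hθ => hg θ (hTΘ hθ)) (fun θ hθ => hgB.mono fun x hx => hx θ (hTΘ hθ))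
    (r - 2 * B * (L * δ)) (n * (L * δ * (2 * B + 2 * |σ| * M)))
  calc P.real {ω | r < ∫ x, g (θhat ω) x ^ 2 ∂ν}
      ≤ P.real (noisy ∪ bad) :=
        ENNReal.toReal_mono (measure_ne_top P _) (measure_mono_ae hsubset)
    _ ≤ P.real noisy + P.real bad := measureReal_union_le _ _
    _ ≤ _ := by
        refine add_le_add hnoisy (hbad.trans_eq ?_)
        ring_nf

end Net

end FiniteSample

section Asymptotics

lemma tendsto_rpow_mul_exp_sub_mul_log_div (c : ℝ) {d : ℝ} (hd : 0 < d) :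
    Tendsto (fun x : ℝ => x ^ d * Real.exp (c - 2 * (d * Real.log (x / d)))) atTop (𝓝 0) := by
  have heq : (fun x : ℝ => Real.exp c * d ^ (2 * d) * x ^ (-d)) =ᶠ[atTop]
      fun x : ℝ => x ^ d * Real.exp (c - 2 * (d * Real.log (x / d))) := by
    filter_upwards [eventually_gt_atTop 0] with x hx
    rw [Real.rpow_def_of_pos hd, Real.rpow_def_of_pos hx, Real.rpow_def_of_pos hx, ← Real.exp_add,
      ← Real.exp_add, ← Real.exp_add, Real.log_div hx.ne' hd.ne']
    ring_nf
  simpa only [mul_zero] using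
    ((tendsto_rpow_neg_atTop hd).const_mul (Real.exp c * d ^ (2 * d))).congr' heq

variable {E X Ω₀ : Type*} [MeasurableSpace E] [PseudoMetricSpace X] [MeasurableSpace Ω₀]
  {P : Measure Ω₀} {ν : Measure E} [IsProbabilityMeasure ν] {μ : Measure ℝ}
  [IsProbabilityMeasure μ] {v L : ℝ≥0} {Z : ℕ → Ω₀ → E × ℝ} {σ l B d : ℝ} {Θ : Set X}
  {g : X → E → ℝ}

lemma eventually_measureReal_lt_integral_sq_le (hd : 0 < d) (hΘ : HasPolynomialCovering d Θ)
    (hindep : iIndepFun Z P) (hZ : ∀ i, HasLaw (Z i) (ν.prod μ) P)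
    (hμ : HasSubgaussianMGF id v μ) (hl : 0 < l) (hσl : 4 * σ ^ 2 * v * l ≤ 1)
    (hg : ∀ θ ∈ Θ, AEMeasurable (g θ) ν)
    (hLip : ∀ᵐ x ∂ν, LipschitzOnWith L (fun θ => g θ x) Θ)
    (hgB : ∀ᵐ x ∂ν, ∀ θ ∈ Θ, |g θ x| ≤ B) {η : ℝ} (hη : 0 < η) :
    ∀ᶠ n : ℕ in atTop, ∀ θhat : Ω₀ → X, (∀ᵐ ω ∂P, θhat ω ∈ Θ) →
      (∀ᵐ ω ∂P, ∑ i ∈ Finset.range n, excessLoss σ (g (θhat ω)) (Z i ω) ≤ 0) →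
      P.real {ω | 2 / excessLossRate l B * (d / n) * Real.log (n / d) <
        ∫ x, g (θhat ω) x ^ 2 ∂ν} ≤ η := by
  obtain ⟨C, hC⟩ := hΘ.exists_finset_isCover
  have hκ := excessLossRate_pos hl B
  set κ := excessLossRate l B
  set m := ∫ y, |y| ∂μ
  obtain ⟨M, hM, hmM⟩ : ∃ M > 0, m / M ≤ η / 2 := ((eventually_gt_atTop 0).and
    ((tendsto_id.const_div_atTop m).eventually_le_const (half_pos hη))).exists
  set c := l * L * (2 * B + 2 * |σ| * M) + κ * (2 * B * L)
  have hlim : Tendsto (fun n : ℕ => C * ((n : ℝ) ^ d *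
      Real.exp (c - 2 * (d * Real.log (n / d))))) atTop (𝓝 0) := by
    simpa only [mul_zero, Function.comp_def] using
      ((tendsto_rpow_mul_exp_sub_mul_log_div c hd).comp tendsto_natCast_atTop_atTop).const_mul C
  filter_upwards [eventually_gt_atTop 0, hlim.eventually_le_const (half_pos hη)]
    with n hn hnet θhat hθhat hmin
  obtain ⟨T, hTΘ, hT, hTcard⟩ := hC (n : ℝ≥0)⁻¹ (by positivity)
    (inv_le_one_of_one_le₀ (by exact_mod_cast hn))
  have hcard : (T.card : ℝ) ≤ C * (n : ℝ) ^ d := by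
    simpa only [NNReal.coe_inv, NNReal.coe_natCast, Real.inv_rpow n.cast_nonneg,
      Real.rpow_neg n.cast_nonneg, inv_inv] using hTcard
  have hexponent : n * (l * (L * ((n : ℝ≥0)⁻¹ : ℝ≥0) * (2 * B + 2 * |σ| * M)) -
      κ * (2 / κ * (d / n) * Real.log (n / d) - 2 * B * (L * ((n : ℝ≥0)⁻¹ : ℝ≥0)))) =
        c - 2 * (d * Real.log (n / d)) := by
    have : (n : ℝ) ≠ 0 := by positivity
    push_cast
    simp only [c]
    field_simp
    ring
  calc _ ≤ m / M + T.card * Real.exp (c - 2 * (d * Real.log (n / d))) := by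
        rw [← hexponent]
        exact measureReal_lt_integral_sq_le hindep hZ hμ hl hσl hg hLip hgB hTΘ hT hn hM hθhat
          hmin _
    _ ≤ η / 2 + C * (n : ℝ) ^ d * Real.exp (c - 2 * (d * Real.log (n / d))) := by gcongr
    _ ≤ η := by linarith

end Asymptotics

lemma abs_sub_le_mul_diam_of_lipschitzOnWith {X : Type*} [PseudoMetricSpace X] {Θ : Set X}
    {f : X → ℝ} {L : ℝ≥0} (hf : LipschitzOnWith L f Θ) (hΘ : Bornology.IsBounded Θ) {θ θ' : X}
    (hθ : θ ∈ Θ) (hθ' : θ' ∈ Θ) : |f θ - f θ'| ≤ L * diam Θ :=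
  (hf.dist_le_mul θ hθ θ' hθ').trans <| by
    gcongr
    exact dist_le_diam_of_mem hΘ hθ hθ'

lemma hasSubgaussianMGF_id_gaussianReal (v : ℝ≥0) :
    HasSubgaussianMGF id v (gaussianReal 0 v) where
  integrable_exp_mul := integrable_exp_mul_gaussianReal
  mgf_le t := by rw [mgf_gaussianReal Measure.map_id, zero_mul, zero_add]

theorem stmt_3_general {X E Ω₀ : Type*} [PseudoMetricSpace X] [MeasurableSpace E]
    [MeasurableSpace Ω₀] {d : ℝ} (hd : 0 < d) {Θ : Set X} (hΘ : HasPolynomialCovering d Θ)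
    {ν : Measure E} [IsProbabilityMeasure ν] {Γ : X → E → ℝ}
    (hΓ : ∀ θ ∈ Θ, AEMeasurable (Γ θ) ν) {L : ℝ≥0}
    (hLip : ∀ᵐ x ∂ν, LipschitzOnWith L (fun θ => Γ θ x) Θ) {θstar : X} (hθstar : θstar ∈ Θ)
    {v : ℝ≥0} {μ : Measure ℝ} [IsProbabilityMeasure μ] (hμ : HasSubgaussianMGF id v μ) (σ : ℝ)
    {P : Measure Ω₀} {s : ℕ → Ω₀ → E} {ξ : ℕ → Ω₀ → ℝ}
    (hindep : iIndepFun (fun i ω => (s i ω, ξ i ω)) P)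
    (hlaw : ∀ i, HasLaw (fun ω => (s i ω, ξ i ω)) (ν.prod μ) P) :
    ∃ K > 0, ∀ η > 0, ∀ᶠ n : ℕ in atTop, ∀ θhat : Ω₀ → X, (∀ᵐ ω ∂P, θhat ω ∈ Θ) →
      (∀ᵐ ω ∂P,
        ∑ i ∈ Finset.range n, ((Γ θstar (s i ω) + σ * ξ i ω) - Γ (θhat ω) (s i ω)) ^ 2 ≤
          ∑ i ∈ Finset.range n, ((Γ θstar (s i ω) + σ * ξ i ω) - Γ θstar (s i ω)) ^ 2) →
      P {ω | K * (d / n) * Real.log (n / d) < ∫ x, (Γ (θhat ω) x - Γ θstar x) ^ 2 ∂ν} ≤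
        ENNReal.ofReal η := by
  have := hindep.isProbabilityMeasure
  have hl : 0 < 1 / (4 * σ ^ 2 * v + 1) := by positivity
  have hσl : 4 * σ ^ 2 * v * (1 / (4 * σ ^ 2 * v + 1)) ≤ 1 := by
    rw [mul_one_div, div_le_one (by positivity)]
    linarith
  have hgLip : ∀ᵐ x ∂ν, LipschitzOnWith L (fun θ => Γ θ x - Γ θstar x) Θ :=
    hLip.mono fun x hx => LipschitzOnWith.of_dist_le_mul fun θ hθ θ' hθ' => by
      simpa only [dist_sub_right] using hx.dist_le_mul θ hθ θ' hθ'
  have hgB : ∀ᵐ x ∂ν, ∀ θ ∈ Θ, |Γ θ x - Γ θstar x| ≤ L * diam Θ := hLip.mono fun x hx θ hθ =>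
    abs_sub_le_mul_diam_of_lipschitzOnWith hx hΘ.isBounded hθ hθstar
  refine ⟨_, div_pos two_pos (excessLossRate_pos hl (L * diam Θ)), fun η hη => ?_⟩
  filter_upwards [eventually_measureReal_lt_integral_sq_le (g := fun θ x => Γ θ x - Γ θstar x)
    hd hΘ hindep hlaw hμ hl hσl (fun θ hθ => (hΓ θ hθ).sub (hΓ θstar hθstar)) hgLip
    hgB hη] with n hn θhat hθhat hmin
  refine (ENNReal.le_ofReal_iff_toReal_le (measure_ne_top P _) hη.le).2 (hn θhat hθhat ?_)
  filter_upwards [hmin] with ω hω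
  have hresidual : ∀ i, excessLoss σ (fun x => Γ (θhat ω) x - Γ θstar x) (s i ω, ξ i ω) =
      ((Γ θstar (s i ω) + σ * ξ i ω) - Γ (θhat ω) (s i ω)) ^ 2 -
        ((Γ θstar (s i ω) + σ * ξ i ω) - Γ θstar (s i ω)) ^ 2 := fun i => by
    unfold excessLoss
    ring
  simpa only [hresidual, Finset.sum_sub_distrib, sub_nonpos] using hω

/-- Parametric-rate convergence of constrained least squares over the PDE solution manifold
`Γ(Θ)`: with i.i.d. design `s_i ~ ν`, Gaussian noise, `Θ ⊆ ℝ^d` compact and `Γ` Lipschitz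
into bounded continuous functions, for every `η > 0` there are `K > 0` and `N` such that for
all `n ≥ N` and every measurable selection `θ̂` of a least-squares minimizer over `Γ(Θ)`,
`P(∫_Ω (Γ(θ̂) − u⋆)² dν > K (d/n) log(n/d)) ≤ η`. -/
theorem stmt_3 {m d : ℕ} (hd : 0 < d)
    (Ωs : Set (EuclideanSpace ℝ (Fin m))) (hΩo : IsOpen Ωs) (hΩb : Bornology.IsBounded Ωs)
    (ν : Measure (EuclideanSpace ℝ (Fin m))) [IsProbabilityMeasure ν] (hν : ν Ωs = 1)
    (Θ : Set (EuclideanSpace ℝ (Fin d))) (hΘ : IsCompact Θ)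
    (Γ : EuclideanSpace ℝ (Fin d) → EuclideanSpace ℝ (Fin m) → ℝ)
    (hcont : ∀ θ ∈ Θ, ContinuousOn (Γ θ) Ωs)
    (hbdd : ∀ θ ∈ Θ, ∃ B : ℝ, ∀ x ∈ Ωs, |Γ θ x| ≤ B)
    (L : ℝ) (hL : 0 < L)
    (hLip : ∀ θ₁ ∈ Θ, ∀ θ₂ ∈ Θ, ∀ x ∈ Ωs, |Γ θ₁ x - Γ θ₂ x| ≤ L * ‖θ₁ - θ₂‖)
    (θstar : EuclideanSpace ℝ (Fin d)) (hθstar : θstar ∈ Θ)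
    (σ : ℝ) (hσ : 0 < σ)
    (Ω₀ : Type*) [MeasurableSpace Ω₀] (P : Measure Ω₀) [IsProbabilityMeasure P]
    (s : ℕ → Ω₀ → EuclideanSpace ℝ (Fin m)) (ξ : ℕ → Ω₀ → ℝ)
    (hmeas : ∀ i, Measurable (s i)) (hmeasξ : ∀ i, Measurable (ξ i))
    -- the pairs `(s_i, ξ_i)` are i.i.d., with `s_i ~ ν` independent of `ξ_i ~ N(0,1)`
    (hindep : iIndepFun (fun i ω => (s i ω, ξ i ω)) P)
    (hdist : ∀ i, P.map (fun ω => (s i ω, ξ i ω)) = ν.prod (gaussianReal 0 1)) :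
    ∀ η > (0 : ℝ), ∃ K > (0 : ℝ), ∃ N : ℕ, ∀ n ≥ N,
      ∀ θhat : Ω₀ → EuclideanSpace ℝ (Fin d), Measurable θhat →
        (∀ ω, θhat ω ∈ Θ) →
        -- `û_n = Γ(θ̂)` minimizes the empirical squared error over `Γ(Θ)`,
        -- where `Y_i = u⋆(s_i) + σ ξ_i`
        (∀ ω, ∀ θ ∈ Θ,
          ∑ i ∈ Finset.range n,
              ((Γ θstar (s i ω) + σ * ξ i ω) - Γ (θhat ω) (s i ω)) ^ 2 ≤
            ∑ i ∈ Finset.range n,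
              ((Γ θstar (s i ω) + σ * ξ i ω) - Γ θ (s i ω)) ^ 2) →
        P {ω | K * ((d : ℝ) / n) * Real.log ((n : ℝ) / d) <
            ∫ x in Ωs, (Γ (θhat ω) x - Γ θstar x) ^ 2 ∂ν} ≤ ENNReal.ofReal η := by
  have hΩ : ∀ᵐ x ∂ν, x ∈ Ωs := (prob_compl_eq_zero_iff hΩo.measurableSet).2 hν
  have hrestrict : ν.restrict Ωs = ν := Measure.restrict_eq_self_of_ae_mem hΩ
  have hcover : HasPolynomialCovering d Θ := by
    simpa only [finrank_euclideanSpace_fin] using hasPolynomialCovering_of_isBounded hΘ.isBounded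
  have hΓ : ∀ θ ∈ Θ, AEMeasurable (Γ θ) ν := fun θ hθ => by
    simpa only [hrestrict] using (hcont θ hθ).aemeasurable (μ := ν) hΩo.measurableSet
  have hLip' : ∀ᵐ x ∂ν, LipschitzOnWith L.toNNReal (fun θ => Γ θ x) Θ := hΩ.mono fun x hx =>
    .of_dist_le' fun θ₁ hθ₁ θ₂ hθ₂ => by
      simpa only [dist_eq_norm, Real.norm_eq_abs] using hLip θ₁ hθ₁ θ₂ hθ₂ x hx
  obtain ⟨K, hK, hrate⟩ := stmt_3_general (Nat.cast_pos.2 hd) hcover hΓ hLip' hθstar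
    (hasSubgaussianMGF_id_gaussianReal 1) σ hindep fun i => ⟨by fun_prop, hdist i⟩
  intro η hη
  obtain ⟨N, hN⟩ := eventually_atTop.1 (hrate η hη)
  refine ⟨K, hK, N, fun n hn θhat _ hθhat hmin => ?_⟩
  rw [hrestrict]
  exact hN n hn θhat (.of_forall hθhat) (.of_forall fun ω => hmin ω θstar hθstar)
end

section
/- Let q ≥ √(2π) be an integer, u ≥ 1 a real sparsity parameter with q^u ≥ 2/log 2, ρ₀ > 1, and let Π₀ be the spike-and-slab prior on ℝ^q. Fix W₀ ∈ ℝ^q with support set Λ₀ ∈ {0,1}^q (i.e., (Λ₀)_j = 1 exactly when (W₀)_j ≠ 0), let s₀ = ‖W₀‖₀, and let r > 0. Define V(W₀, r) := {V ∈ ℝ^q : the support of V equals Λ₀ and ‖V − W₀‖_∞ ≤ r}. Then Π₀(V(W₀, r)) ≥ (1/2) exp( −s₀(u+2) log q − (s₀/2)(‖W₀‖_∞ + r)² + s₀ log r ). -/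
open MeasureTheory ProbabilityTheory

/-- The number of nonzero coordinates (`ℓ⁰` "norm") of a vector in `ℝ^q`. -/
noncomputable def l0norm {q : ℕ} (V : Fin q → ℝ) : ℕ :=
  (Finset.univ.filter fun j => V j ≠ 0).card

/-- Law of a single pair `(Λ_j, W_j)`: `Λ_j ~ Ber(1/(1+q^{u+1}))`, and given `Λ_j`,
`W_j ~ N(0,1)` if `Λ_j = 1` and `W_j ~ N(0, 1/ρ₀)` if `Λ_j = 0`. -/
noncomputable def pairLaw (q : ℕ) (u ρ₀ : ℝ) : Measure (Bool × ℝ) :=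
  ENNReal.ofReal (1 / (1 + (q : ℝ) ^ (u + 1))) •
      ((Measure.dirac true).prod (gaussianReal 0 1)) +
    ENNReal.ofReal (1 - 1 / (1 + (q : ℝ) ^ (u + 1))) •
      ((Measure.dirac false).prod (gaussianReal 0 (1 / ρ₀).toNNReal))

/-- The spike-and-slab prior `Π₀` on `ℝ^q`: the law of the coordinatewise product `Λ ⊙ W`,
where the pairs `(Λ_j, W_j)` are i.i.d. with law `pairLaw q u ρ₀`. -/
noncomputable def spikeSlab (q : ℕ) (u ρ₀ : ℝ) : Measure (Fin q → ℝ) :=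
  (Measure.pi fun _ : Fin q => pairLaw q u ρ₀).map
    (fun ω j => if (ω j).1 then (ω j).2 else 0)

/-!
Multiplying by `Λ_j` turns every spike into an exact zero, so the prior is a product of the laws
`p N(0,1) + (1-p) δ₀` with `p = 1/(1+q^{u+1})`. The set `V(W₀, r)` is a product too: the `q - s₀`
coordinates off the support contribute `(1-p)^{q-s₀} ≥ 1 - qp ≥ 1/2` by Bernoulli's inequality, and
each coordinate on the support contributes at least `p` times the length `2r` times the Gaussian
density at `‖W₀‖_∞ + r`, where `2p/√(2π) ≥ q^{-(u+2)}` since `q ≥ 2`, `q^u ≥ 2` and `√(2π) ≤ 8/3`.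
-/

open Metric Set
open scoped ENNReal NNReal

section ZeroInflated

variable {E : Type*} [MeasurableSpace E] [Zero E]

/-- The zero-inflated law `p μ + (1 - p) δ₀`: a draw from `μ` is kept with probability `p` and
replaced by `0` otherwise. The weights are truncated to `[0, ∞)`, so `p ∈ [0, 1]` is intended. -/
noncomputable def zeroInflated (p : ℝ) (μ : Measure E) : Measure E :=
  ENNReal.ofReal p • μ + ENNReal.ofReal (1 - p) • Measure.dirac 0

instance zeroInflated.instIsFiniteMeasure (p : ℝ) (μ : Measure E) [IsFiniteMeasure μ] :
    IsFiniteMeasure (zeroInflated p μ) := by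
  have := μ.smul_finite (c := ENNReal.ofReal p) ENNReal.ofReal_ne_top
  have := (Measure.dirac (0 : E)).smul_finite (c := ENNReal.ofReal (1 - p)) ENNReal.ofReal_ne_top
  unfold zeroInflated
  infer_instance

lemma ofReal_mul_le_zeroInflated (p : ℝ) (μ : Measure E) (s : Set E) :
    ENNReal.ofReal p * μ s ≤ zeroInflated p μ s :=
  le_self_add

lemma ofReal_one_sub_le_zeroInflated (p : ℝ) (μ : Measure E) {s : Set E} (hs : 0 ∈ s) :
    ENNReal.ofReal (1 - p) ≤ zeroInflated p μ s := by
  simp [zeroInflated, Measure.dirac_apply_of_mem hs]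

lemma measurable_ite_fst_snd_zero : Measurable fun x : Bool × E => if x.1 then x.2 else 0 :=
  Measurable.ite (measurable_fst (measurableSet_singleton true)) measurable_snd measurable_const

lemma map_ite_dirac_prod_mixture (p : ℝ) (μ ν : Measure E) [SFinite μ] [IsProbabilityMeasure ν] :
    (ENNReal.ofReal p • (Measure.dirac true).prod μ +
        ENNReal.ofReal (1 - p) • (Measure.dirac false).prod ν).map
      (fun x => if x.1 then x.2 else 0) = zeroInflated p μ := by
  have hslab : ((Measure.dirac true).prod μ).map (fun x => if x.1 then x.2 else 0) = μ := by
    rw [Measure.dirac_prod, Measure.map_map measurable_ite_fst_snd_zero measurable_prodMk_left]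
    exact Measure.map_id
  have hspike :
      ((Measure.dirac false).prod ν).map (fun x => if x.1 then x.2 else 0) = Measure.dirac 0 := by
    rw [Measure.dirac_prod, Measure.map_map measurable_ite_fst_snd_zero measurable_prodMk_left]
    exact (Measure.map_const ν 0).trans (by rw [measure_univ, one_smul])
  rw [Measure.map_add _ _ measurable_ite_fst_snd_zero, Measure.map_smul, Measure.map_smul, hslab,
    hspike, zeroInflated]

end ZeroInflated

section SameSupportBall

variable {ι E : Type*} [PseudoMetricSpace E] [Zero E]

/-- The set `V(w, r)` of vectors that have the same support as `w` and lie within sup-distance `r`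
of it. -/
def sameSupportBall (w : ι → E) (r : ℝ) : Set (ι → E) :=
  {v | (∀ j, v j ≠ 0 ↔ w j ≠ 0) ∧ ∀ j, v j ∈ closedBall (w j) r}

lemma sameSupportBall_eq_pi [DecidableEq E] (w : ι → E) {r : ℝ} (hr : 0 ≤ r) :
    sameSupportBall w r =
      univ.pi fun j => if w j ≠ 0 then closedBall (w j) r \ {0} else {0} := by
  ext v
  simp only [sameSupportBall, mem_ofPred_eq, ← forall_and, mem_univ_pi]
  refine forall_congr' fun j => ?_
  by_cases hj : w j = 0
  · simp only [hj, ne_eq, not_true_eq_false, iff_false, not_not, if_false, mem_singleton_iff]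
    exact and_iff_left_of_imp fun hv => hv ▸ mem_closedBall_self hr
  · simp [hj, and_comm]

lemma pow_mul_pow_le_pi_zeroInflated_sameSupportBall [Fintype ι] [MeasurableSpace E]
    [DecidableEq E] {p r : ℝ} {μ : Measure E} [IsFiniteMeasure μ] {w : ι → E} {a : ℝ≥0∞}
    (hr : 0 ≤ r) (ha : ∀ j, w j ≠ 0 → a ≤ ENNReal.ofReal p * μ (closedBall (w j) r \ {0})) :
    a ^ (Finset.univ.filter fun j => w j ≠ 0).card *
        ENNReal.ofReal (1 - p) ^ (Finset.univ.filter fun j => ¬ w j ≠ 0).card ≤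
      Measure.pi (fun _ => zeroInflated p μ) (sameSupportBall w r) := by
  rw [sameSupportBall_eq_pi w hr, Measure.pi_pi, ← Finset.prod_const, ← Finset.prod_const,
    ← Finset.prod_ite]
  refine Finset.prod_le_prod' fun j _ => ?_
  split_ifs with hj
  · exact (ha j hj).trans (ofReal_mul_le_zeroInflated p μ _)
  · exact ofReal_one_sub_le_zeroInflated p μ rfl

end SameSupportBall

section Gaussian

lemma gaussianPDF_add_le_of_abs_sub_le {m x R : ℝ} (v : ℝ≥0) (hx : |x - m| ≤ R) :
    gaussianPDF m v (m + R) ≤ gaussianPDF m v x := by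
  have hsq : (x - m) ^ 2 ≤ (m + R - m) ^ 2 := by
    rw [add_sub_cancel_left]
    exact sq_le_sq' (neg_le_of_abs_le hx) (le_of_abs_le hx)
  unfold gaussianPDF gaussianPDFReal
  gcongr

lemma gaussianPDF_mul_volume_le_gaussianReal {m R : ℝ} {v : ℝ≥0} (hv : v ≠ 0) {s : Set ℝ}
    (hs : s ⊆ closedBall m R) :
    gaussianPDF m v (m + R) * volume s ≤ gaussianReal m v s := by
  rw [gaussianReal_apply m hv, ← setLIntegral_const]
  exact setLIntegral_mono (measurable_gaussianPDF m v) fun x hx =>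
    gaussianPDF_add_le_of_abs_sub_le v (hs hx)

lemma gaussianPDF_mul_ofReal_le_gaussianReal_closedBall_sdiff {m M w : ℝ} {v : ℝ≥0} (hv : v ≠ 0)
    (hw : |w - m| ≤ M) (r c : ℝ) :
    gaussianPDF m v (m + (M + r)) * ENNReal.ofReal (2 * r) ≤
      gaussianReal m v (closedBall w r \ {c}) := by
  have hsub : closedBall w r \ {c} ⊆ closedBall m (M + r) :=
    sdiff_subset.trans <| closedBall_subset_closedBall' <| by
      rw [Real.dist_eq, add_comm]
      gcongr
  have hvol : volume (closedBall w r \ {c}) = ENNReal.ofReal (2 * r) := by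
    rw [measure_sdiff_null (measure_singleton c), Real.volume_closedBall]
  exact hvol ▸ gaussianPDF_mul_volume_le_gaussianReal hv hsub

end Gaussian

section SlabProbability

/-- The slab probability `1 / (1 + x^{u+1})` of the prior in dimension `x = q`. -/
noncomputable def slabProb (x u : ℝ) : ℝ :=
  1 / (1 + x ^ (u + 1))

lemma slabProb_nonneg {x : ℝ} (hx : 0 ≤ x) (u : ℝ) : 0 ≤ slabProb x u := by
  unfold slabProb
  positivity

lemma slabProb_le_one {x : ℝ} (hx : 0 ≤ x) (u : ℝ) : slabProb x u ≤ 1 :=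
  div_le_one_of_le₀ (le_add_of_nonneg_right (by positivity)) (by positivity)

lemma mul_slabProb_le_half {x u : ℝ} (hx : 0 < x) (hxu : 2 ≤ x ^ u) : x * slabProb x u ≤ 1 / 2 := by
  rw [slabProb, Real.rpow_add_one hx.ne', mul_one_div, div_le_iff₀ (by positivity)]
  nlinarith

lemma half_le_one_sub_slabProb_pow {q n : ℕ} {u : ℝ} (hn : n ≤ q) (hq : 0 < q)
    (hqu : 2 ≤ (q : ℝ) ^ u) : 1 / 2 ≤ (1 - slabProb q u) ^ n := by
  have hp := slabProb_nonneg q.cast_nonneg u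
  have hnp : n * slabProb q u ≤ 1 / 2 :=
    le_trans (by gcongr) (mul_slabProb_le_half (Nat.cast_pos.2 hq) hqu)
  calc 1 / 2 ≤ 1 + n * -slabProb q u := by linarith
    _ ≤ (1 + -slabProb q u) ^ n :=
      one_add_mul_le_pow (by linarith [slabProb_le_one q.cast_nonneg u]) n
    _ = (1 - slabProb q u) ^ n := by rw [← sub_eq_add_neg]

lemma sqrt_two_mul_pi_le_eight_thirds : √(2 * Real.pi) ≤ 8 / 3 :=
  Real.sqrt_le_iff.2 ⟨by norm_num, by linarith [Real.pi_lt_d2]⟩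

lemma rpow_neg_le_slabProb_mul {x u : ℝ} (hx : 2 ≤ x) (hxu : 2 ≤ x ^ u) :
    x ^ (-(u + 2)) ≤ slabProb x u * (2 * (√(2 * Real.pi))⁻¹) := by
  have hx0 : 0 < x := by linarith
  have hQ : 2 ≤ x ^ (u + 1) := by
    rw [Real.rpow_add_one hx0.ne']
    nlinarith
  have hsplit : x ^ (u + 2) = x ^ (u + 1) * x := by
    rw [← Real.rpow_add_one hx0.ne', add_assoc, one_add_one_eq_two]
  rw [Real.rpow_neg hx0.le, hsplit, slabProb]
  set Q := x ^ (u + 1)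
  have hmain : (1 + Q) * √(2 * Real.pi) ≤ 2 * (Q * x) := by
    calc (1 + Q) * √(2 * Real.pi) ≤ (1 + Q) * (8 / 3) := by
          gcongr
          exact sqrt_two_mul_pi_le_eight_thirds
      _ ≤ 2 * (Q * 2) := by linarith
      _ ≤ 2 * (Q * x) := by gcongr
  calc (Q * x)⁻¹ = 2 / (2 * (Q * x)) := by field_simp
    _ ≤ 2 / ((1 + Q) * √(2 * Real.pi)) := by gcongr
    _ = 1 / (1 + Q) * (2 * (√(2 * Real.pi))⁻¹) := by field_simp

lemma exp_le_slabProb_mul_gaussianPDFReal {x u r : ℝ} (hx : 2 ≤ x) (hxu : 2 ≤ x ^ u) (hr : 0 < r)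
    (R : ℝ) :
    Real.exp (-(u + 2) * Real.log x - R ^ 2 / 2 + Real.log r) ≤
      slabProb x u * (gaussianPDFReal 0 1 R * (2 * r)) := by
  calc Real.exp (-(u + 2) * Real.log x - R ^ 2 / 2 + Real.log r)
      = x ^ (-(u + 2)) * Real.exp (-R ^ 2 / 2) * r := by
        rw [Real.exp_add, Real.exp_log hr, sub_eq_add_neg, Real.exp_add, ← neg_div,
          Real.rpow_def_of_pos (by linarith), mul_comm (Real.log x)]
    _ ≤ slabProb x u * (2 * (√(2 * Real.pi))⁻¹) * Real.exp (-R ^ 2 / 2) * r := by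
        gcongr
        exact rpow_neg_le_slabProb_mul hx hxu
    _ = slabProb x u * (gaussianPDFReal 0 1 R * (2 * r)) := by
        simp only [gaussianPDFReal, NNReal.coe_one, mul_one, sub_zero]
        ring

lemma two_le_of_two_le_rpow {q : ℕ} {u : ℝ} (h : 2 ≤ (q : ℝ) ^ u) : 2 ≤ q := by
  by_contra! hq
  have hle : (q : ℝ) ^ u ≤ 1 := by
    interval_cases q
    · exact_mod_cast Real.zero_rpow_le_one u
    · simp
  linarith

lemma two_le_two_div_log_two : 2 ≤ 2 / Real.log 2 :=
  le_div_self zero_le_two (Real.log_pos one_lt_two) (by linarith [Real.log_two_lt_d9])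

end SlabProbability

section SpikeSlab

lemma map_pairLaw (q : ℕ) (u ρ₀ : ℝ) :
    (pairLaw q u ρ₀).map (fun x => if x.1 then x.2 else 0) =
      zeroInflated (slabProb q u) (gaussianReal 0 1) :=
  map_ite_dirac_prod_mixture _ _ _

lemma spikeSlab_eq_pi_zeroInflated (q : ℕ) (u ρ₀ : ℝ) :
    spikeSlab q u ρ₀ =
      Measure.pi fun _ : Fin q => zeroInflated (slabProb q u) (gaussianReal 0 1) := by
  have hσ (_ : Fin q) : SigmaFinite ((pairLaw q u ρ₀).map fun x => if x.1 then x.2 else 0) := by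
    rw [map_pairLaw]
    infer_instance
  rw [← map_pairLaw q u ρ₀]
  exact Measure.pi_map_pi (hμ := hσ) fun _ => measurable_ite_fst_snd_zero.aemeasurable

lemma ofReal_exp_le_slabProb_mul_gaussianReal {x u r M w : ℝ} (hx : 2 ≤ x) (hxu : 2 ≤ x ^ u)
    (hr : 0 < r) (hw : |w| ≤ M) :
    ENNReal.ofReal (Real.exp (-(u + 2) * Real.log x - (M + r) ^ 2 / 2 + Real.log r)) ≤
      ENNReal.ofReal (slabProb x u) * gaussianReal 0 1 (closedBall w r \ {0}) := by
  have hp := slabProb_nonneg (by linarith : 0 ≤ x) u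
  refine (ENNReal.ofReal_le_ofReal
    (exp_le_slabProb_mul_gaussianPDFReal hx hxu hr (M + r))).trans ?_
  rw [ENNReal.ofReal_mul hp, ENNReal.ofReal_mul (gaussianPDFReal_nonneg _ _ _)]
  gcongr
  simpa only [zero_add, gaussianPDF] using
    gaussianPDF_mul_ofReal_le_gaussianReal_closedBall_sdiff one_ne_zero
      (by rwa [sub_zero] : |w - 0| ≤ M) r 0

theorem stmt_7_general (q : ℕ) (u : ℝ) (hqu : 2 ≤ (q : ℝ) ^ u) (ρ₀ : ℝ) (_hρ : 0 < ρ₀)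
    (W₀ : Fin q → ℝ) (r : ℝ) (hr : 0 < r) :
    ENNReal.ofReal ((1 / 2) * Real.exp (-(l0norm W₀ : ℝ) * (u + 2) * Real.log q
        - ((l0norm W₀ : ℝ) / 2) * ((⨆ j, |W₀ j|) + r) ^ 2
        + (l0norm W₀ : ℝ) * Real.log r)) ≤
      spikeSlab q u ρ₀ {V | (∀ j, V j ≠ 0 ↔ W₀ j ≠ 0) ∧ ∀ j, |V j - W₀ j| ≤ r} := by
  have hq : 2 ≤ q := two_le_of_two_le_rpow hqu
  have hW₀ (j : Fin q) : |W₀ j| ≤ ⨆ i, |W₀ i| :=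
    le_ciSup (f := fun i => |W₀ i|) (finite_range _).bddAbove j
  set M := ⨆ j, |W₀ j|
  have hexp : -(l0norm W₀ : ℝ) * (u + 2) * Real.log q - ((l0norm W₀ : ℝ) / 2) * (M + r) ^ 2
      + (l0norm W₀ : ℝ) * Real.log r =
      l0norm W₀ * (-(u + 2) * Real.log q - (M + r) ^ 2 / 2 + Real.log r) := by ring
  have hzeros : (Finset.univ.filter fun j => ¬ W₀ j ≠ 0).card ≤ q :=
    (Finset.card_le_univ _).trans_eq (Fintype.card_fin q)
  have hslab (j : Fin q) (_ : W₀ j ≠ 0) := ofReal_exp_le_slabProb_mul_gaussianReal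
    (by exact_mod_cast hq) hqu hr (hW₀ j)
  rw [hexp, Real.exp_nat_mul, mul_comm, ENNReal.ofReal_mul (by positivity),
    ENNReal.ofReal_pow (by positivity), spikeSlab_eq_pi_zeroInflated]
  change _ ≤ Measure.pi _ (sameSupportBall W₀ r)
  refine le_trans ?_ (pow_mul_pow_le_pi_zeroInflated_sameSupportBall hr.le hslab)
  rw [← ENNReal.ofReal_pow (sub_nonneg.2 (slabProb_le_one q.cast_nonneg u))]
  unfold l0norm
  gcongr
  exact half_le_one_sub_slabProb_pow hzeros (by omega) hqu

end SpikeSlab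

/-- Lower bound on the spike-and-slab prior mass of the set of vectors with the same support
as `W₀` lying within `r` of `W₀` in `‖·‖_∞`, with `s₀ = ‖W₀‖₀`. -/
theorem stmt_7 (q : ℕ) (hq : Real.sqrt (2 * Real.pi) ≤ q) (u : ℝ) (hu : 1 ≤ u)
    (hqu : 2 / Real.log 2 ≤ (q : ℝ) ^ u) (ρ₀ : ℝ) (hρ : 1 < ρ₀)
    (W₀ : Fin q → ℝ) (r : ℝ) (hr : 0 < r) :
    ENNReal.ofReal ((1 / 2) * Real.exp (-(l0norm W₀ : ℝ) * (u + 2) * Real.log q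
        - ((l0norm W₀ : ℝ) / 2) * ((⨆ j, |W₀ j|) + r) ^ 2
        + (l0norm W₀ : ℝ) * Real.log r)) ≤
      spikeSlab q u ρ₀ {V | (∀ j, V j ≠ 0 ↔ W₀ j ≠ 0) ∧ ∀ j, |V j - W₀ j| ≤ r} := by
  exact stmt_7_general q u (two_le_two_div_log_two.trans hqu) ρ₀ (zero_lt_one.trans hρ) W₀ r hr
end

section
/- Let X be a real-valued random variable on a probability space and let K, R > 0 be such that E[|X|^m] ≤ (1/2) m! K^{m−2} R² for every integer m ≥ 2 (the Bernstein condition with parameters (K, R)). Then E[e^{|X|/(2K)} − 1 − |X|/(2K)] is finite and the Bernstein norm satisfies ρ_{2K}(X)² := 2(2K)² E[e^{|X|/(2K)} − 1 − |X|/(2K)] ≤ 2R², i.e. ρ_{2K}(X) ≤ √2 R. -/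
open MeasureTheory

/-! Expand `e^y - 1 - y = ∑_{m ≥ 2} y^m / m!` at `y = ‖X‖ / L` and integrate term by term. The
Bernstein condition cancels the factorials and bounds the `m`-th term by
`R² / (2L²) * (K / L)^(m - 2)`, a geometric series with sum `R² / (2L(L - K))` whenever `K < L`. -/

section BernsteinMoments

open scoped Nat

lemma hasSum_exp_sub_one_sub (y : ℝ) :
    HasSum (fun n : ℕ => y ^ (n + 2) / (n + 2)!) (Real.exp y - 1 - y) := by
  have exp_series : HasSum (fun n : ℕ => y ^ n / n !) (Real.exp y) := by
    rw [Real.exp_eq_exp_ℝ]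
    exact NormedSpace.expSeries_div_hasSum_exp y
  simpa [Finset.sum_range_succ, sub_sub] using (hasSum_nat_add_iff' 2).mpr exp_series

lemma ofReal_exp_sub_one_sub_eq_tsum {y : ℝ} (hy : 0 ≤ y) :
    ENNReal.ofReal (Real.exp y - 1 - y) =
      ∑' n : ℕ, ENNReal.ofReal (y ^ (n + 2) / (n + 2)!) := by
  have series := hasSum_exp_sub_one_sub y
  rw [← series.tsum_eq, ENNReal.ofReal_tsum_of_nonneg (fun n => by positivity) series.summable]

variable {Ω E : Type*} [MeasurableSpace Ω] {μ : Measure Ω}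

lemma lintegral_exp_sub_one_sub_eq_tsum {Y : Ω → ℝ} (hY : AEMeasurable Y μ) (hY₀ : 0 ≤ᵐ[μ] Y) :
    ∫⁻ ω, ENNReal.ofReal (Real.exp (Y ω) - 1 - Y ω) ∂μ =
      ∑' n : ℕ, ∫⁻ ω, ENNReal.ofReal (Y ω ^ (n + 2) / (n + 2)!) ∂μ := by
  rw [← lintegral_tsum fun n => by fun_prop]
  refine lintegral_congr_ae ?_
  filter_upwards [hY₀] with ω hω using ofReal_exp_sub_one_sub_eq_tsum hω

lemma tsum_ofReal_const_mul_geometric {c r : ℝ} (hc : 0 ≤ c) (hr₀ : 0 ≤ r) (hr₁ : r < 1) :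
    ∑' n : ℕ, ENNReal.ofReal (c * r ^ n) = ENNReal.ofReal (c * (1 - r)⁻¹) := by
  have series := (hasSum_geometric_of_lt_one hr₀ hr₁).mul_left c
  rw [← series.tsum_eq, ENNReal.ofReal_tsum_of_nonneg (fun n => by positivity) series.summable]

/-- The Bernstein condition with parameters `(K, R)`: `E‖X‖^m ≤ (1/2) m! K^(m-2) R²` for every
integer `m ≥ 2`. Moments are lower Lebesgue integrals, so the condition includes their finiteness,
which a Bochner integral would not express. -/
def HasBernsteinMoments [Norm E] (μ : Measure Ω) (X : Ω → E) (K R : ℝ) : Prop :=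
  ∀ m : ℕ, 2 ≤ m →
    ∫⁻ ω, ENNReal.ofReal (‖X ω‖ ^ m) ∂μ ≤ ENNReal.ofReal ((1 / 2) * m ! * K ^ (m - 2) * R ^ 2)

namespace HasBernsteinMoments

variable {X : Ω → E} {K L R : ℝ}

lemma lintegral_pow_div_factorial_le [Norm E] (hX : HasBernsteinMoments μ X K R) (hL : 0 < L)
    (n : ℕ) :
    ∫⁻ ω, ENNReal.ofReal ((‖X ω‖ / L) ^ (n + 2) / (n + 2)!) ∂μ ≤
      ENNReal.ofReal (R ^ 2 / (2 * L ^ 2) * (K / L) ^ n) := by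
  set c : ℝ := (L ^ (n + 2) * (n + 2)!)⁻¹ with hc_def
  have hc : 0 ≤ c := by positivity
  have term_eq (ω : Ω) : (‖X ω‖ / L) ^ (n + 2) / (n + 2)! = c * ‖X ω‖ ^ (n + 2) := by
    rw [div_pow, div_div, div_eq_inv_mul]
  calc ∫⁻ ω, ENNReal.ofReal ((‖X ω‖ / L) ^ (n + 2) / (n + 2)!) ∂μ
      = ENNReal.ofReal c * ∫⁻ ω, ENNReal.ofReal (‖X ω‖ ^ (n + 2)) ∂μ := by
        simp_rw [term_eq, ENNReal.ofReal_mul hc]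
        exact lintegral_const_mul' _ _ ENNReal.ofReal_ne_top
    _ ≤ ENNReal.ofReal c * ENNReal.ofReal ((1 / 2) * (n + 2)! * K ^ n * R ^ 2) := by
        gcongr
        exact hX (n + 2) (by lia)
    _ = ENNReal.ofReal (R ^ 2 / (2 * L ^ 2) * (K / L) ^ n) := by
        rw [← ENNReal.ofReal_mul hc, hc_def, div_pow K]
        congr 1
        field_simp
        ring

lemma lintegral_exp_sub_one_sub_le [SeminormedAddCommGroup E] (hX : HasBernsteinMoments μ X K R)
    (hX_meas : AEStronglyMeasurable X μ) (hK : 0 ≤ K) (hKL : K < L) :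
    ∫⁻ ω, ENNReal.ofReal (Real.exp (‖X ω‖ / L) - 1 - ‖X ω‖ / L) ∂μ ≤
      ENNReal.ofReal (R ^ 2 / (2 * L * (L - K))) := by
  have hL : 0 < L := hK.trans_lt hKL
  have hL_sub : L - K ≠ 0 := (sub_pos.mpr hKL).ne'
  have hY₀ : 0 ≤ᵐ[μ] fun ω => ‖X ω‖ / L := .of_forall fun ω => by positivity
  calc ∫⁻ ω, ENNReal.ofReal (Real.exp (‖X ω‖ / L) - 1 - ‖X ω‖ / L) ∂μ
      = ∑' n : ℕ, ∫⁻ ω, ENNReal.ofReal ((‖X ω‖ / L) ^ (n + 2) / (n + 2)!) ∂μ :=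
        lintegral_exp_sub_one_sub_eq_tsum (hX_meas.norm.aemeasurable.div_const L) hY₀
    _ ≤ ∑' n : ℕ, ENNReal.ofReal (R ^ 2 / (2 * L ^ 2) * (K / L) ^ n) :=
        ENNReal.tsum_le_tsum (hX.lintegral_pow_div_factorial_le hL)
    _ = ENNReal.ofReal (R ^ 2 / (2 * L ^ 2) * (1 - K / L)⁻¹) :=
        tsum_ofReal_const_mul_geometric (by positivity) (by positivity) ((div_lt_one hL).mpr hKL)
    _ = ENNReal.ofReal (R ^ 2 / (2 * L * (L - K))) := by
        rw [one_sub_div hL.ne']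
        congr 1
        field_simp

end HasBernsteinMoments

theorem stmt_12_general [SeminormedAddCommGroup E] {X : Ω → E} {K L R : ℝ}
    (hX : AEStronglyMeasurable X μ) (hK : 0 ≤ K) (hKL : K < L)
    (hbern : HasBernsteinMoments μ X K R) :
    (∫⁻ ω, ENNReal.ofReal (Real.exp (‖X ω‖ / L) - 1 - ‖X ω‖ / L) ∂μ) ≠ ⊤ ∧
      2 * L ^ 2 *
          (∫⁻ ω, ENNReal.ofReal (Real.exp (‖X ω‖ / L) - 1 - ‖X ω‖ / L) ∂μ).toReal ≤
        L / (L - K) * R ^ 2 := by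
  have hL : 0 < L := hK.trans_lt hKL
  have hL_sub : 0 < L - K := sub_pos.mpr hKL
  have bound := hbern.lintegral_exp_sub_one_sub_le hX hK hKL
  refine ⟨ne_top_of_le_ne_top ENNReal.ofReal_ne_top bound, ?_⟩
  calc _ ≤ 2 * L ^ 2 * (R ^ 2 / (2 * L * (L - K))) := by
        gcongr
        exact ENNReal.toReal_le_of_le_ofReal (by positivity) bound
    _ = L / (L - K) * R ^ 2 := by field_simp

end BernsteinMoments

/-- If `X` satisfies the Bernstein moment condition `E[|X|^m] ≤ (1/2) m! K^{m−2} R²` for all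
integers `m ≥ 2`, then `E[e^{|X|/(2K)} − 1 − |X|/(2K)]` is finite and the Bernstein norm
satisfies `ρ_{2K}(X)² = 2(2K)² E[e^{|X|/(2K)} − 1 − |X|/(2K)] ≤ 2R²`. -/
theorem stmt_12 {Ω₀ : Type*} [MeasurableSpace Ω₀] (P : Measure Ω₀) [IsProbabilityMeasure P]
    (X : Ω₀ → ℝ) (hX : Measurable X) (K R : ℝ) (hK : 0 < K) (hR : 0 < R)
    (hbern : ∀ m : ℕ, 2 ≤ m →
      ∫⁻ ω, ENNReal.ofReal (|X ω| ^ m) ∂P ≤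
        ENNReal.ofReal ((1 / 2) * (Nat.factorial m) * K ^ (m - 2) * R ^ 2)) :
    (∫⁻ ω, ENNReal.ofReal (Real.exp (|X ω| / (2 * K)) - 1 - |X ω| / (2 * K)) ∂P) ≠ ⊤ ∧
      2 * (2 * K) ^ 2 *
          (∫⁻ ω, ENNReal.ofReal (Real.exp (|X ω| / (2 * K)) - 1 - |X ω| / (2 * K)) ∂P).toReal ≤
        2 * R ^ 2 := by
  have constant_eq : 2 * K / (2 * K - K) = 2 := by field_simp; norm_num
  simpa only [constant_eq, Real.norm_eq_abs] using
    stmt_12_general (X := X) (L := 2 * K) hX.aestronglyMeasurable hK.le (by linarith) hbern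
end

section
/- Let H be a real inner product space, d a positive integer, λ > 0, and h = (h₁,…,h_d) ∈ H^d. Define Σ ∈ ℝ^{d×d} by Σ_{jk} = ⟨h_j, h_k⟩ + (1/λ)·1{j=k}. Suppose g = Σ_{j=1}^d (θ⋆)_j h_j for some θ⋆ ∈ ℝ^d, and let J := min_{θ∈ℝ^d} [ ‖g − Σ_{j=1}^d θ_j h_j‖² + (1/λ)‖θ‖₂² ]. Then J = (1/λ) θ⋆ᵀ (I − (1/λ) Σ^{−1}) θ⋆, and consequently J ≤ ‖θ⋆‖₂² / λ. -/
open Matrix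

/-- `Σ_{jk} = ⟨h_j, h_k⟩ + (1/λ)·1{j=k}`. -/
noncomputable def ridgeMat {H : Type*} [NormedAddCommGroup H] [InnerProductSpace ℝ H]
    {d : ℕ} (lam : ℝ) (h : Fin d → H) : Matrix (Fin d) (Fin d) ℝ :=
  Matrix.of fun j k => (inner ℝ (h j) (h k) : ℝ) + if j = k then 1 / lam else 0

/-- The ridge objective `θ ↦ ‖g − Σ_j θ_j h_j‖² + (1/λ)‖θ‖₂²`. -/
noncomputable def ridgeLoss {H : Type*} [NormedAddCommGroup H] [InnerProductSpace ℝ H]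
    {d : ℕ} (lam : ℝ) (g : H) (h : Fin d → H) (θ : Fin d → ℝ) : ℝ :=
  ‖g - ∑ j, θ j • h j‖ ^ 2 + (1 / lam) * ∑ j, θ j ^ 2

/-!
If `g = ∑ j, (θ⋆)_j h_j`, then `‖g - ∑ j, θ_j h_j‖²` is the quadratic form of the Gram matrix `G`
at `e = θ⋆ - θ`. With `c = 1/λ` and `Σ = G + c I`, the objective is therefore
`eᵀ Σ e - 2 eᵀ(c θ⋆) + c ‖θ⋆‖²`, and completing the square makes its minimum
`c ‖θ⋆‖² - (c θ⋆)ᵀ Σ⁻¹ (c θ⋆)`. The bound on the minimum is the value of the objective at `θ⋆`.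
-/

section QuadraticForm

variable {ι R : Type*} [Fintype ι] [DecidableEq ι]

theorem dotProduct_mulVec_sub_two_mul_dotProduct [CommRing R] {S : Matrix ι ι R}
    (hS : S.IsSymm) (hdet : IsUnit S.det) (b x : ι → R) :
    x ⬝ᵥ S *ᵥ x - 2 * (x ⬝ᵥ b) =
      (x - S⁻¹ *ᵥ b) ⬝ᵥ S *ᵥ (x - S⁻¹ *ᵥ b) - b ⬝ᵥ S⁻¹ *ᵥ b := by
  have mulVec_inv_mulVec : S *ᵥ S⁻¹ *ᵥ b = b := by
    rw [mulVec_mulVec, mul_nonsing_inv _ hdet, one_mulVec]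
  have inv_mulVec_dotProduct : (S⁻¹ *ᵥ b) ⬝ᵥ S *ᵥ x = x ⬝ᵥ b := by
    rw [← dotProduct_transpose_mulVec, hS.eq, mulVec_inv_mulVec]
  simp only [mulVec_sub, dotProduct_sub, sub_dotProduct, mulVec_inv_mulVec, inv_mulVec_dotProduct,
    dotProduct_comm (S⁻¹ *ᵥ b) b]
  ring

theorem isLeast_range_dotProduct_mulVec_sub_two_mul_dotProduct [Field R] [PartialOrder R]
    [IsOrderedAddMonoid R] [StarRing R] [TrivialStar R] {S : Matrix ι ι R} (hS : S.PosDef)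
    (b : ι → R) :
    IsLeast (Set.range fun x => x ⬝ᵥ S *ᵥ x - 2 * (x ⬝ᵥ b)) (-(b ⬝ᵥ S⁻¹ *ᵥ b)) := by
  have hdet : IsUnit S.det := (isUnit_iff_isUnit_det S).1 hS.isUnit
  simp only [dotProduct_mulVec_sub_two_mul_dotProduct
    (isHermitian_iff_isSymm.1 hS.isHermitian) hdet b]
  refine ⟨⟨S⁻¹ *ᵥ b, by simp⟩, ?_⟩
  rintro _ ⟨x, rfl⟩
  have hnonneg := hS.posSemidef.dotProduct_mulVec_nonneg (x - S⁻¹ *ᵥ b)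
  rw [star_trivial] at hnonneg
  exact (le_add_of_nonneg_left hnonneg).trans_eq (sub_eq_add_neg _ _).symm

theorem dotProduct_mulVec_add_mul_dotProduct [CommRing R] (G : Matrix ι ι R) (c : R)
    (a x : ι → R) :
    (a - x) ⬝ᵥ G *ᵥ (a - x) + c * (x ⬝ᵥ x) =
      (a - x) ⬝ᵥ (G + c • (1 : Matrix ι ι R)) *ᵥ (a - x) - 2 * ((a - x) ⬝ᵥ (c • a)) +
        c * (a ⬝ᵥ a) := by
  simp only [add_mulVec, smul_mulVec, one_mulVec, dotProduct_add, dotProduct_smul, smul_eq_mul,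
    dotProduct_sub, sub_dotProduct, dotProduct_comm x a]
  ring

theorem mul_dotProduct_one_sub_smul_mulVec [CommRing R] (A : Matrix ι ι R) (c : R) (a : ι → R) :
    c * (a ⬝ᵥ (1 - c • A) *ᵥ a) = -((c • a) ⬝ᵥ A *ᵥ (c • a)) + c * (a ⬝ᵥ a) := by
  simp only [sub_mulVec, one_mulVec, smul_mulVec, mulVec_smul, dotProduct_sub, dotProduct_smul,
    smul_dotProduct, smul_eq_mul]
  ring

theorem isLeast_range_dotProduct_mulVec_add_mul_dotProduct [Field R] [PartialOrder R] [StarRing R]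
    [StarOrderedRing R] [TrivialStar R] {G : Matrix ι ι R} (hG : G.PosSemidef) {c : R} (hc : 0 < c)
    (a : ι → R) :
    IsLeast (Set.range fun x => (a - x) ⬝ᵥ G *ᵥ (a - x) + c * (x ⬝ᵥ x))
      (c * (a ⬝ᵥ (1 - c • (G + c • (1 : Matrix ι ι R))⁻¹) *ᵥ a)) := by
  have hpos : (G + c • (1 : Matrix ι ι R)).PosDef :=
    PosDef.posSemidef_add hG (PosDef.one.smul hc)
  have hmin := isLeast_range_dotProduct_mulVec_sub_two_mul_dotProduct hpos (c • a)
  rw [← (Equiv.subLeft a).surjective.range_comp] at hmin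
  have hshift := (monotone_id.add_const (c * (a ⬝ᵥ a))).map_isLeast hmin
  rw [← Set.range_comp] at hshift
  simp only [dotProduct_mulVec_add_mul_dotProduct G c a, mul_dotProduct_one_sub_smul_mulVec]
  exact hshift

end QuadraticForm

section Gram

variable {ι E : Type*} [Fintype ι] [SeminormedAddCommGroup E] [InnerProductSpace ℝ E]

theorem norm_sum_smul_sq (v : ι → E) (x : ι → ℝ) :
    ‖∑ i, x i • v i‖ ^ 2 = x ⬝ᵥ gram ℝ v *ᵥ x := by
  rw [← real_inner_self_eq_norm_sq, ← star_dotProduct_gram_mulVec, star_trivial]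

end Gram

section Ridge

variable {H : Type*} [NormedAddCommGroup H] [InnerProductSpace ℝ H] {d : ℕ}

theorem ridgeMat_eq_gram_add_smul_one (lam : ℝ) (h : Fin d → H) :
    ridgeMat lam h = gram ℝ h + (1 / lam) • (1 : Matrix (Fin d) (Fin d) ℝ) := by
  ext j k
  simp [ridgeMat, one_apply]

theorem ridgeLoss_sum_smul (lam : ℝ) (h : Fin d → H) (a θ : Fin d → ℝ) :
    ridgeLoss lam (∑ j, a j • h j) h θ =
      (a - θ) ⬝ᵥ gram ℝ h *ᵥ (a - θ) + (1 / lam) * (θ ⬝ᵥ θ) := by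
  rw [← norm_sum_smul_sq]
  simp only [ridgeLoss, Pi.sub_apply, sub_smul, Finset.sum_sub_distrib, dotProduct, sq]

theorem ridgeLoss_sum_smul_self (lam : ℝ) (h : Fin d → H) (a : Fin d → ℝ) :
    ridgeLoss lam (∑ j, a j • h j) h a = (∑ j, a j ^ 2) / lam := by
  rw [ridgeLoss, sub_self]
  simp [div_eq_inv_mul]

end Ridge

/-- If `g = Σ_j (θ⋆)_j h_j`, the minimum `J` of the ridge objective equals
`(1/λ) θ⋆ᵀ (I − (1/λ)Σ⁻¹) θ⋆`, and consequently `J ≤ ‖θ⋆‖₂²/λ`. -/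
theorem stmt_14 {H : Type*} [NormedAddCommGroup H] [InnerProductSpace ℝ H]
    {d : ℕ} (hd : 0 < d) (lam : ℝ) (hlam : 0 < lam) (h : Fin d → H)
    (θstar : Fin d → ℝ) (g : H) (hg : g = ∑ j, θstar j • h j) :
    IsLeast (Set.range (ridgeLoss lam g h))
      ((1 / lam) * (θstar ⬝ᵥ
        (((1 : Matrix (Fin d) (Fin d) ℝ) - (1 / lam) • (ridgeMat lam h)⁻¹) *ᵥ θstar))) ∧
    (1 / lam) * (θstar ⬝ᵥ
        (((1 : Matrix (Fin d) (Fin d) ℝ) - (1 / lam) • (ridgeMat lam h)⁻¹) *ᵥ θstar)) ≤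
      (∑ j, θstar j ^ 2) / lam := by
  subst hg
  have hmin : IsLeast (Set.range (ridgeLoss lam (∑ j, θstar j • h j) h))
      ((1 / lam) * (θstar ⬝ᵥ
        (((1 : Matrix (Fin d) (Fin d) ℝ) - (1 / lam) • (ridgeMat lam h)⁻¹) *ᵥ θstar))) := by
    rw [funext (ridgeLoss_sum_smul lam h θstar), ridgeMat_eq_gram_add_smul_one]
    exact isLeast_range_dotProduct_mulVec_add_mul_dotProduct (posSemidef_gram ℝ h)
      (one_div_pos.2 hlam) θstar
  exact ⟨hmin, (hmin.2 ⟨θstar, rfl⟩).trans_eq (ridgeLoss_sum_smul_self lam h θstar)⟩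
end

section
/- Let H be a real inner product space, d a positive integer, and f = (f₁,…,f_d), g = (g₁,…,g_d) ∈ H^d. Let A, B ∈ ℝ^{d×d} be the Gram matrices A_{jk} = ⟨f_j, f_k⟩ and B_{jk} = ⟨g_j, g_k⟩, and write |f| := (Σ_{j=1}^d ‖f_j‖²)^{1/2}. Then the operator norm satisfies ‖A − B‖_op ≤ √2 (|f| + |g|) · |f − g|, where |f − g| = (Σ_{j=1}^d ‖f_j − g_j‖²)^{1/2}. -/
open Matrix

/-!
With `⟨u, v⟩` denoting the matrix of inner products `⟪u i, v j⟫`, sesquilinearity gives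
`A - B = ⟨f, f - g⟩ + ⟨f - g, g⟩`. Cauchy-Schwarz in each entry bounds the Frobenius norm of
`⟨u, v⟩` by `|u| |v|`, and the Frobenius norm dominates the operator norm. This yields the bound
even without the factor `√2`.
-/

section GramPerturbation

open WithLp
open scoped Matrix.Norms.Frobenius

variable {𝕜 E m n : Type*}

/-- The cross-Gram matrix of two families of vectors: the entry at `i j` is the inner product
`⟪u i, v j⟫`. It is used to factor the difference of two Gram matrices, and `crossGram 𝕜 v v` is
`Matrix.gram 𝕜 v`. -/
def crossGram (𝕜 : Type*) [Inner 𝕜 E] (u : m → E) (v : n → E) : Matrix m n 𝕜 :=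
  of fun i j ↦ inner 𝕜 (u i) (v j)

theorem gram_sub_gram_eq_crossGram_add_crossGram [RCLike 𝕜] [SeminormedAddCommGroup E]
    [InnerProductSpace 𝕜 E] (f g : n → E) :
    gram 𝕜 f - gram 𝕜 g = crossGram 𝕜 f (f - g) + crossGram 𝕜 (f - g) g := by
  ext i j
  simp [crossGram, inner_sub_left, inner_sub_right]

variable [Fintype m] [Fintype n]

theorem frobenius_norm_sq [SeminormedAddCommGroup E] (A : Matrix m n E) :
    ‖A‖ ^ 2 = ∑ i, ∑ j, ‖A i j‖ ^ 2 := by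
  simp only [frobenius_norm_def, Real.rpow_two, ← Real.sqrt_eq_rpow]
  exact Real.sq_sqrt (by positivity)

variable [RCLike 𝕜]

theorem norm_toLp_mulVec_le_frobenius_norm_mul (A : Matrix m n 𝕜) (x : n → 𝕜) :
    ‖toLp 2 (A *ᵥ x)‖ ≤ ‖A‖ * ‖toLp 2 x‖ := by
  rw [← frobenius_norm_replicateCol (ι := Unit), ← frobenius_norm_replicateCol (ι := Unit),
    replicateCol_mulVec]
  exact frobenius_norm_mul A _

theorem norm_toEuclideanCLM_le_frobenius_norm [DecidableEq n] (A : Matrix n n 𝕜) :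
    ‖toEuclideanCLM (𝕜 := 𝕜) A‖ ≤ ‖A‖ :=
  ContinuousLinearMap.opNorm_le_bound _ (norm_nonneg A) fun x ↦
    norm_toLp_mulVec_le_frobenius_norm_mul A (ofLp x)

variable [SeminormedAddCommGroup E] [InnerProductSpace 𝕜 E]

theorem frobenius_norm_crossGram_le (u : m → E) (v : n → E) :
    ‖crossGram 𝕜 u v‖ ≤ ‖toLp 2 u‖ * ‖toLp 2 v‖ := by
  refine (sq_le_sq₀ (norm_nonneg _) (by positivity)).1 ?_
  calc
    ‖crossGram 𝕜 u v‖ ^ 2 = ∑ i, ∑ j, ‖inner 𝕜 (u i) (v j)‖ ^ 2 := frobenius_norm_sq _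
    _ ≤ ∑ i, ∑ j, (‖u i‖ * ‖v j‖) ^ 2 := by
      gcongr
      exact norm_inner_le_norm _ _
    _ = (‖toLp 2 u‖ * ‖toLp 2 v‖) ^ 2 := by
      simp only [mul_pow, PiLp.norm_sq_eq_of_L2, Finset.sum_mul_sum]

theorem frobenius_norm_gram_sub_gram_le (f g : n → E) :
    ‖gram 𝕜 f - gram 𝕜 g‖ ≤ (‖toLp 2 f‖ + ‖toLp 2 g‖) * ‖toLp 2 (f - g)‖ := by
  calc
    ‖gram 𝕜 f - gram 𝕜 g‖ = ‖crossGram 𝕜 f (f - g) + crossGram 𝕜 (f - g) g‖ := by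
      rw [gram_sub_gram_eq_crossGram_add_crossGram]
    _ ≤ ‖crossGram 𝕜 f (f - g)‖ + ‖crossGram 𝕜 (f - g) g‖ := norm_add_le _ _
    _ ≤ ‖toLp 2 f‖ * ‖toLp 2 (f - g)‖ + ‖toLp 2 (f - g)‖ * ‖toLp 2 g‖ := by
      gcongr <;> exact frobenius_norm_crossGram_le _ _
    _ = (‖toLp 2 f‖ + ‖toLp 2 g‖) * ‖toLp 2 (f - g)‖ := by ring

end GramPerturbation

theorem stmt_16_general {𝕜 E n : Type*} [RCLike 𝕜] [SeminormedAddCommGroup E]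
    [InnerProductSpace 𝕜 E] [Fintype n] [DecidableEq n] (f g : n → E) :
    ‖toEuclideanCLM (𝕜 := 𝕜) (gram 𝕜 f - gram 𝕜 g)‖ ≤
      (√(∑ j, ‖f j‖ ^ 2) + √(∑ j, ‖g j‖ ^ 2)) * √(∑ j, ‖f j - g j‖ ^ 2) := by
  simpa only [PiLp.norm_eq_of_L2, Pi.sub_apply] using
    (norm_toEuclideanCLM_le_frobenius_norm _).trans (frobenius_norm_gram_sub_gram_le (𝕜 := 𝕜) f g)

/-- Gram matrix perturbation bound: with `A_{jk} = ⟨f_j, f_k⟩`, `B_{jk} = ⟨g_j, g_k⟩`,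
`‖A − B‖_op ≤ √2 (|f| + |g|) |f − g|` where `|f| = (Σ_j ‖f_j‖²)^{1/2}`. -/
theorem stmt_16 {H : Type*} [NormedAddCommGroup H] [InnerProductSpace ℝ H]
    {d : ℕ} (hd : 0 < d) (f g : Fin d → H) :
    ‖Matrix.toEuclideanCLM (𝕜 := ℝ)
        ((Matrix.of fun j k => (inner ℝ (f j) (f k) : ℝ)) -
          Matrix.of fun j k => (inner ℝ (g j) (g k) : ℝ))‖ ≤
      Real.sqrt 2 * (Real.sqrt (∑ j, ‖f j‖ ^ 2) + Real.sqrt (∑ j, ‖g j‖ ^ 2)) *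
        Real.sqrt (∑ j, ‖f j - g j‖ ^ 2) := by
  have one_le_sqrt_two : 1 ≤ √(2 : ℝ) := Real.one_le_sqrt.2 one_le_two
  refine (stmt_16_general f g).trans ?_
  gcongr
  exact le_mul_of_one_le_left (by positivity) one_le_sqrt_two
end

section
/- Let d be a positive integer, c > 0, and let A, B ∈ ℝ^{d×d} be symmetric positive definite matrices whose smallest eigenvalues both satisfy λ_min(A) ≥ c and λ_min(B) ≥ c. Then |log det A − log det B| ≤ (√d / c) ‖A − B‖_F, where ‖·‖_F denotes the Frobenius norm. -/
open Matrix

/-!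
`log det` is concave on positive definite matrices, with gradient `B⁻¹` at `B`, so
`log det A - log det B ≤ tr ((A - B) B⁻¹) ≤ ‖A - B‖ ‖B⁻¹‖` in the Frobenius norm. The concavity
inequality is the case `B = 1`, which is `log x ≤ x - 1` on eigenvalues, after a congruence.
If `c ≤ B`, then `c ‖B⁻¹‖² ≤ tr (B⁻¹ B B⁻¹) = tr B⁻¹ ≤ √d ‖B⁻¹‖`, that is, `‖B⁻¹‖ ≤ √d / c`.
Exchanging `A` and `B` gives the absolute value.
-/

section

open scoped Matrix.Norms.Frobenius MatrixOrder ComplexOrder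

variable {m n 𝕜 : Type*} [Fintype m] [Fintype n]

theorem frobenius_norm_eq_sqrt_sum {E : Type*} [SeminormedAddCommGroup E] (M : Matrix m n E) :
    ‖M‖ = √(∑ i, ∑ j, ‖M i j‖ ^ 2) := by
  simp [frobenius_norm_def, Real.sqrt_eq_rpow]

theorem norm_trace_mul_le_frobenius_norm_mul {R : Type*} [NonUnitalSeminormedRing R]
    (M : Matrix m n R) (N : Matrix n m R) : ‖(M * N).trace‖ ≤ ‖M‖ * ‖N‖ := by
  calc ‖(M * N).trace‖ ≤ ∑ i, ∑ j, ‖M i j‖ * ‖Nᵀ i j‖ :=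
        (norm_sum_le _ _).trans <| Finset.sum_le_sum fun i _ =>
          (norm_sum_le _ _).trans <| Finset.sum_le_sum fun j _ => norm_mul_le _ _
    _ ≤ ‖M‖ * ‖Nᵀ‖ := by
        simp only [frobenius_norm_eq_sqrt_sum, ← Fintype.sum_prod_type']
        exact Real.sum_mul_le_sqrt_mul_sqrt _ _ _
    _ = ‖M‖ * ‖N‖ := by rw [frobenius_norm_transpose]

variable [RCLike 𝕜]

theorem frobenius_norm_sq_eq_re_trace (M : Matrix m n 𝕜) :
    ‖M‖ ^ 2 = RCLike.re (Mᴴ * M).trace := by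
  rw [← frobenius_norm_transpose, frobenius_norm_eq_sqrt_sum, Real.sq_sqrt (by positivity)]
  simp [trace, mul_apply, RCLike.conj_mul, -map_pow, ← RCLike.ofReal_pow]

variable [DecidableEq n] {A B : Matrix n n 𝕜} {c : ℝ}

theorem frobenius_norm_one : ‖(1 : Matrix n n 𝕜)‖ = √(Fintype.card n) := by
  simpa using congrArg NNReal.toReal (frobenius_nnnorm_one (n := n) (α := 𝕜))

theorem algebraMap_le_iff_le_eigenvalues (hA : A.IsHermitian) :
    algebraMap ℝ (Matrix n n 𝕜) c ≤ A ↔ ∀ i, c ≤ hA.eigenvalues i := by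
  rw [algebraMap_le_iff_le_spectrum hA.isSelfAdjoint, hA.spectrum_real_eq_range_eigenvalues,
    Set.forall_mem_range]

theorem log_det_le_trace_sub_card (hA : A.PosDef) :
    Real.log (RCLike.re A.det) ≤ RCLike.re A.trace - Fintype.card n := by
  rw [hA.1.det_eq_prod_eigenvalues, hA.1.trace_eq_sum_eigenvalues, ← RCLike.ofReal_prod,
    ← RCLike.ofReal_sum, RCLike.ofReal_re, RCLike.ofReal_re,
    Real.log_prod fun i _ => (hA.eigenvalues_pos i).ne']
  calc ∑ i, Real.log (hA.1.eigenvalues i) ≤ ∑ i, (hA.1.eigenvalues i - 1) :=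
        Finset.sum_le_sum fun i _ => Real.log_le_sub_one_of_pos (hA.eigenvalues_pos i)
    _ = ∑ i, hA.1.eigenvalues i - Fintype.card n := by simp

theorem log_det_sub_log_det_le_trace (hA : A.PosDef) (hB : B.PosDef) :
    Real.log (RCLike.re A.det) - Real.log (RCLike.re B.det) ≤
      RCLike.re ((A - B) * B⁻¹).trace := by
  obtain ⟨S, hS, hSB⟩ :=
    CStarAlgebra.isStrictlyPositive_iff_eq_star_mul_self.mp hB.inv.isStrictlyPositive
  have hB_unit : IsUnit B.det := B.isUnit_iff_isUnit_det.mp hB.isUnit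
  have hdet : A.det = (S * A * star S).det * B.det := by
    rw [det_mul_comm, ← mul_assoc, ← hSB, det_mul, mul_right_comm, ← det_mul,
      nonsing_inv_mul _ hB_unit, det_one, one_mul]
  have htrace : (S * A * star S).trace = (A * B⁻¹).trace := by
    rw [mul_assoc, trace_mul_comm, mul_assoc, ← hSB]
  have hC : (S * A * star S).PosDef := hS.posDef_star_right_conjugate_iff.mpr hA
  have hre_det : RCLike.re A.det = RCLike.re (S * A * star S).det * RCLike.re B.det := by
    rw [hdet, RCLike.mul_re, (RCLike.pos_iff.mp hB.det_pos).2, mul_zero, sub_zero]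
  calc Real.log (RCLike.re A.det) - Real.log (RCLike.re B.det)
      = Real.log (RCLike.re (S * A * star S).det) := by
        rw [hre_det, Real.log_mul (RCLike.pos_iff.mp hC.det_pos).1.ne'
          (RCLike.pos_iff.mp hB.det_pos).1.ne', add_sub_cancel_right]
    _ ≤ RCLike.re (S * A * star S).trace - Fintype.card n := log_det_le_trace_sub_card hC
    _ = RCLike.re ((A - B) * B⁻¹).trace := by
        simp [htrace, Matrix.sub_mul, mul_nonsing_inv _ hB_unit]

theorem posDef_of_algebraMap_le (hc : 0 < c) (hcA : algebraMap ℝ _ c ≤ A) : A.PosDef := by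
  have hc_posDef : (algebraMap ℝ (Matrix n n 𝕜) c).PosDef := by
    simp [algebraMap_eq_diagonal, hc]
  simpa using hc_posDef.add_posSemidef hcA

theorem frobenius_norm_inv_le_of_algebraMap_le (hc : 0 < c) (hcA : algebraMap ℝ _ c ≤ A) :
    ‖A⁻¹‖ ≤ √(Fintype.card n) / c := by
  have hA : A.PosDef := posDef_of_algebraMap_le hc hcA
  have hinv : (A⁻¹)ᴴ = A⁻¹ := hA.inv.isHermitian
  have hquad : c * ‖A⁻¹‖ ^ 2 ≤ RCLike.re A⁻¹.trace := by
    have hpos := (RCLike.nonneg_iff.mp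
      (PosSemidef.conjTranspose_mul_mul_same hcA A⁻¹).trace_nonneg).1
    rw [Matrix.mul_sub, Matrix.sub_mul, hinv,
      nonsing_inv_mul _ (A.isUnit_iff_isUnit_det.mp hA.isUnit), Matrix.one_mul,
      ← Algebra.commutes, mul_assoc, ← Algebra.smul_def, trace_sub, trace_smul, map_sub,
      RCLike.smul_re] at hpos
    rw [frobenius_norm_sq_eq_re_trace, hinv]
    exact sub_nonneg.mp hpos
  have htrace : RCLike.re A⁻¹.trace ≤ √(Fintype.card n) * ‖A⁻¹‖ := by
    simpa only [Matrix.one_mul, frobenius_norm_one] using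
      (RCLike.re_le_norm _).trans (norm_trace_mul_le_frobenius_norm_mul 1 A⁻¹)
  rw [le_div_iff₀' hc]
  rcases (norm_nonneg A⁻¹).eq_or_lt with hzero | hpos
  · simp [← hzero]
  · exact le_of_mul_le_mul_right (by linarith) hpos

theorem log_det_sub_log_det_le_frobenius_norm (hc : 0 < c) (hA : A.PosDef)
    (hcB : algebraMap ℝ _ c ≤ B) :
    Real.log (RCLike.re A.det) - Real.log (RCLike.re B.det) ≤
      √(Fintype.card n) / c * ‖A - B‖ :=
  calc Real.log (RCLike.re A.det) - Real.log (RCLike.re B.det)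
      ≤ RCLike.re ((A - B) * B⁻¹).trace :=
        log_det_sub_log_det_le_trace hA (posDef_of_algebraMap_le hc hcB)
    _ ≤ ‖A - B‖ * ‖B⁻¹‖ :=
        (RCLike.re_le_norm _).trans (norm_trace_mul_le_frobenius_norm_mul _ _)
    _ ≤ ‖A - B‖ * (√(Fintype.card n) / c) := by
        gcongr
        exact frobenius_norm_inv_le_of_algebraMap_le hc hcB
    _ = √(Fintype.card n) / c * ‖A - B‖ := mul_comm _ _

theorem stmt_17_general (hc : 0 < c) (hA : A.IsHermitian) (hB : B.IsHermitian)
    (hAc : ∀ i, c ≤ hA.eigenvalues i) (hBc : ∀ i, c ≤ hB.eigenvalues i) :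
    |Real.log (RCLike.re A.det) - Real.log (RCLike.re B.det)| ≤
      √(Fintype.card n) / c * ‖A - B‖ := by
  rw [← algebraMap_le_iff_le_eigenvalues] at hAc hBc
  refine abs_sub_le_iff.mpr
    ⟨log_det_sub_log_det_le_frobenius_norm hc (posDef_of_algebraMap_le hc hAc) hBc, ?_⟩
  rw [norm_sub_rev]
  exact log_det_sub_log_det_le_frobenius_norm hc (posDef_of_algebraMap_le hc hBc) hAc

end

/-- If `A, B` are symmetric positive definite with all eigenvalues at least `c > 0`, then
`|log det A − log det B| ≤ (√d / c) ‖A − B‖_F`. -/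
theorem stmt_17 {d : ℕ} (hd : 0 < d) (c : ℝ) (hc : 0 < c)
    (A B : Matrix (Fin d) (Fin d) ℝ) (hA : A.IsHermitian) (hB : B.IsHermitian)
    (hAc : ∀ i, c ≤ hA.eigenvalues i) (hBc : ∀ i, c ≤ hB.eigenvalues i) :
    |Real.log A.det - Real.log B.det| ≤
      (Real.sqrt d / c) * Real.sqrt (∑ j, ∑ k, ((A - B) j k) ^ 2) := by
  simpa [frobenius_norm_eq_sqrt_sum] using stmt_17_general hc hA hB hAc hBc
end
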